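/- Assume μ is a martingale measure. Define, for δ > 0, V_Mart(δ) = sup { E_π[f(Y)] − L_δ(E_π[c_N(X, Y)]^{1/p}) : π a bicausal coupling with first marginal μ whose second marginal is a martingale measure and E_π[c_N(X, Y)] < ∞ }, and V_Mart(0) = E_μ[f(X)]. Let H denote the set of predictable processes h = (h_n)_{n=1}^N (each h_n: X → ℝ^d Borel and F_{n−1}-measurable) with ‖h‖_{L^q(μ)} < ∞. Then lim_{δ→0+} (V_Mart(δ) − V_Mart(0))/δ = L*( inf_{h ∈ H} ‖ᵒ𝔻f − h‖_{L^q(μ)} ) = L*( inf_{h ∈ H} ( Σ_{n=1}^N E_μ[ |E_μ[𝔻_n f(X) | F_n] − h_n|_*^q ] )^{1/q} ). -/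

import Mathlib

open MeasureTheory Filter Set
open scoped ENNReal

noncomputable section

/-- Discrete path space `X = (ℝ^d)^N`. -/
abbrev PathD (N d : ℕ) : Type := Fin N → Fin d → ℝ

/-- The `ℓ_e` norm on `ℝ^d`. -/
def lpnorm {d : ℕ} (e : ℝ) (v : Fin d → ℝ) : ℝ := (∑ i, |v i| ^ e) ^ (1 / e)

/-- Coordinate `x_n` of a path, with the convention `x_0 = 0` (and `x_n = 0` for `n > N`). -/
def coord {N d : ℕ} (x : PathD N d) (n : ℕ) : Fin d → ℝ :=
  if h : 1 ≤ n ∧ n ≤ N then x ⟨n - 1, by omega⟩ else 0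

/-- The cost `c_N(x,y) = Σ_{n=1}^N |Δx_n − Δy_n|^p` (with `|·|` the `ℓ_p` norm). -/
def cN {N d : ℕ} (p : ℝ) (x y : PathD N d) : ℝ :=
  ∑ n ∈ Finset.Icc 1 N,
    lpnorm p ((coord x n - coord x (n - 1)) - (coord y n - coord y (n - 1))) ^ p

/-- The σ-algebra `F_n = σ(x_1, …, x_n)` on the discrete path space. -/
def Fn (N d n : ℕ) : MeasurableSpace (PathD N d) :=
  MeasurableSpace.comap (fun x (i : Fin N) => if (i : ℕ) + 1 ≤ n then x i else 0) inferInstance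

/-- Conditional independence of `m₁` and `m₂` given `m'` under `π`, expressed through
conditional expectations of indicators. -/
def CondIndepOn {Ω : Type*} [MeasurableSpace Ω] (π : Measure Ω)
    (m' m₁ m₂ : MeasurableSpace Ω) : Prop :=
  ∀ A B : Set Ω, MeasurableSet[m₁] A → MeasurableSet[m₂] B →
    (π[(A ∩ B).indicator (fun _ => (1 : ℝ)) | m']) =ᵐ[π]
      (π[A.indicator (fun _ => (1 : ℝ)) | m']) * (π[B.indicator (fun _ => (1 : ℝ)) | m'])

/-- `π` is a coupling with first marginal `μ` which is causal to its second marginal: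
for every `n`, `σ(Y_1,…,Y_n)` is conditionally independent of `σ(X_1,…,X_N)` given `F_n`. -/
def IsCausalStar {N d : ℕ} (μ : Measure (PathD N d))
    (π : Measure (PathD N d × PathD N d)) : Prop :=
  π.map Prod.fst = μ ∧
  ∀ n : ℕ, CondIndepOn π ((Fn N d n).comap Prod.fst)
    ((Fn N d n).comap Prod.snd) ((Fn N d N).comap Prod.fst)

/-- `π` is a causal coupling of `(μ, ν)`. -/
def IsCausalCoupling {N d : ℕ} (μ ν : Measure (PathD N d))
    (π : Measure (PathD N d × PathD N d)) : Prop :=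
  π.map Prod.snd = ν ∧ IsCausalStar μ π

/-- `π` is a bicausal coupling of `(μ, ν)`: both `π` and its swap are causal. -/
def IsBicausalCoupling {N d : ℕ} (μ ν : Measure (PathD N d))
    (π : Measure (PathD N d × PathD N d)) : Prop :=
  IsCausalCoupling μ ν π ∧
  (∀ n : ℕ, CondIndepOn π ((Fn N d n).comap Prod.snd)
    ((Fn N d n).comap Prod.fst) ((Fn N d N).comap Prod.snd))

/-- `μ` is a martingale measure on the discrete path space: every coordinate is integrable
and `E_μ[X_n | F_{n−1}] = X_{n−1}` a.s. (with `X_0 = 0`). -/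
def IsMartingaleMeasure {N d : ℕ} (μ : Measure (PathD N d)) : Prop :=
  ∀ n : ℕ, 1 ≤ n → n ≤ N →
    Integrable (fun x => coord x n) μ ∧
    (μ[(fun x => coord x n) | Fn N d (n - 1)]) =ᵐ[μ] (fun x => coord x (n - 1))


/-- The discrete pathwise Malliavin derivative `𝔻_n f = Σ_{k=n}^N ∂_k f`, where `∂_k f` is the
`ℝ^d`-valued partial gradient of `f` in the `k`-th coordinate block (`k = 1, …, N`). -/
def Dn {N d : ℕ} (f : PathD N d → ℝ) (n : ℕ) (x : PathD N d) : Fin d → ℝ :=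
  fun j => ∑ k : Fin N, if n ≤ (k : ℕ) + 1 then
    fderiv ℝ f x (Pi.single k (Pi.single j 1)) else 0

/-- Standing assumptions on the penalty function `L : [0,∞) → [0,∞]`:
continuous, non-decreasing, `L(0) = 0` and `liminf_{u→∞} L(u)/u^p = +∞`. -/
structure PenaltyAssumptions (p : ℝ) (L : ℝ → ℝ≥0∞) : Prop where
  cont : ContinuousOn L (Set.Ici 0)
  mono : MonotoneOn L (Set.Ici 0)
  zero : L 0 = 0
  growth : Tendsto (fun u : ℝ => L u / ENNReal.ofReal (u ^ p)) atTop (nhds ⊤)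

/-- The convex conjugate `L*(v) = sup_{u ≥ 0} { u v − L(u) }`, valued in the extended reals. -/
def Lconj (L : ℝ → ℝ≥0∞) (v : ℝ) : EReal :=
  ⨆ u : {u : ℝ // 0 ≤ u}, ((u.1 * v : ℝ) : EReal) - ((L u.1 : ℝ≥0∞) : EReal)

/-- The expected transport cost `E_π[c_N(X,Y)]` of a coupling. -/
def costD {N d : ℕ} (p : ℝ) (π : Measure (PathD N d × PathD N d)) : ℝ :=
  ∫ z, cN p z.1 z.2 ∂π

/-- The penalised causal DRO value
`V(δ) = sup_{π ∈ Π_c(μ,*), E_π[c_N] < ∞} { E_π[f(Y)] − δ L(E_π[c_N(X,Y)]^{1/p}/δ) }`,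
valued in the extended reals. -/
def VD {N d : ℕ} (p : ℝ) (L : ℝ → ℝ≥0∞) (μ : Measure (PathD N d))
    (f : PathD N d → ℝ) (δ : ℝ) : EReal :=
  ⨆ π : {π : Measure (PathD N d × PathD N d) //
      IsProbabilityMeasure π ∧ IsCausalStar μ π ∧
      Integrable (fun z => cN p z.1 z.2) π},
    ((∫ z, f z.2 ∂π.1 : ℝ) : EReal) -
      ((ENNReal.ofReal δ * L ((costD p π.1) ^ (1 / p) / δ) : ℝ≥0∞) : EReal)

/-- The `L^q(μ)`-norm `(Σ_{n=1}^N E_μ[|E_μ[𝔻_n f(X)|F_n]|_*^q])^{1/q}` of the optional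
projection of the discrete pathwise Malliavin derivative. -/
def optionalNorm {N d : ℕ} (q : ℝ) (μ : Measure (PathD N d)) (f : PathD N d → ℝ) : ℝ :=
  (∑ n ∈ Finset.Icc 1 N, ∫ x, lpnorm q ((μ[Dn f n | Fn N d n]) x) ^ q ∂μ) ^ (1 / q)

/-- The map `v(e) = (e_1|e_1|^{q−2}, …, e_d|e_d|^{q−2})` on `ℝ^d`. -/
def vmap {d : ℕ} (q : ℝ) (e : Fin d → ℝ) : Fin d → ℝ :=
  fun i => e i * |e i| ^ (q - 2)

/-- The inverse `Δ^{-1}` of the increment map: `(Δ^{-1} y)_n = Σ_{k=1}^n y_k`. -/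
def DeltaInv {N d : ℕ} (y : PathD N d) : PathD N d :=
  fun i => ∑ k : Fin N, if (k : ℕ) ≤ (i : ℕ) then y k else 0

/-- A process `h = (h_n)_{n=1}^N` is predictable if `h_n` is `F_{n−1}`-measurable. -/
def IsPredictable {N d : ℕ} (h : ℕ → PathD N d → Fin d → ℝ) : Prop :=
  ∀ n : ℕ, 1 ≤ n → n ≤ N → Measurable[Fn N d (n - 1)] (h n)

end

open MeasureTheory Filter

noncomputable section

/-- The penalised bicausal DRO value under the martingale constraint:
`V_Mart(δ) = sup { E_π[f(Y)] − δ L(E_π[c_N]^{1/p}/δ) }`, the supremum being over bicausal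
couplings `π` with first marginal `μ`, second marginal a martingale measure, and finite cost. -/
def VMartD {N d : ℕ} (p : ℝ) (L : ℝ → ℝ≥0∞) (μ : Measure (PathD N d))
    (f : PathD N d → ℝ) (δ : ℝ) : EReal :=
  ⨆ π : {π : Measure (PathD N d × PathD N d) //
      IsProbabilityMeasure π ∧ IsBicausalCoupling μ (π.map Prod.snd) π ∧
      IsMartingaleMeasure (π.map Prod.snd) ∧
      Integrable (fun z => cN p z.1 z.2) π},
    ((∫ z, f z.2 ∂π.1 : ℝ) : EReal) -
      ((ENNReal.ofReal δ * L ((costD p π.1) ^ (1 / p) / δ) : ℝ≥0∞) : EReal)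

/-- A function with vanishing integral on every `m`-measurable set is orthogonal to every
`m`-measurable function. -/
theorem integral_mul_eq_zero_of_setIntegral_eq_zero {Ω : Type*} {m mΩ : MeasurableSpace Ω}
    (hm : m ≤ mΩ) {π : Measure Ω} [IsFiniteMeasure π] {a c : Ω → ℝ} (ha : Integrable a π)
    (hS : ∀ S, MeasurableSet[m] S → ∫ x in S, a x ∂π = 0) (hc : Measurable[m] c)
    (hac : Integrable (fun x => a x * c x) π) : ∫ x, a x * c x ∂π = 0 := by
  have h0 : (0 : Ω → ℝ) =ᵐ[π] π[a | m] := by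
    refine ae_eq_condExp_of_forall_setIntegral_eq hm ha
      (fun s _ _ => (integrable_zero _ _ _).integrableOn) (fun s hs _ => ?_)
      stronglyMeasurable_zero.aestronglyMeasurable
    simp [hS s hs]
  have h1 : π[a * c | m] =ᵐ[π] π[a | m] * c :=
    condExp_mul_of_stronglyMeasurable_right hc.stronglyMeasurable hac ha
  have h2 : ∫ x, (a * c) x ∂π = ∫ x, (π[a * c | m]) x ∂π := (integral_condExp hm).symm
  change ∫ x, (a * c) x ∂π = 0
  rw [h2]
  refine integral_eq_zero_of_ae ?_
  filter_upwards [h0, h1] with x hx0 hx1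
  simp [hx1, ← hx0]

theorem CondIndepOn.setIntegral_sub_condExp {Ω : Type*} {m' m₁ m₂ mΩ : MeasurableSpace Ω}
    {π : Measure Ω} [IsProbabilityMeasure π] (h : CondIndepOn π m' m₁ m₂)
    (hm' : m' ≤ mΩ) (hm₁ : m₁ ≤ mΩ) (hm₂ : m₂ ≤ mΩ) {A B : Set Ω} (hA : MeasurableSet[m₁] A)
    (hB : MeasurableSet[m₂] B) :
    ∫ x in B, (A.indicator (fun _ => (1 : ℝ)) x - (π[A.indicator (fun _ => (1 : ℝ)) | m']) x) ∂π
      = 0 := by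
  have hAi : Integrable (A.indicator (fun _ => (1 : ℝ))) π :=
    (integrable_const 1).indicator (hm₁ _ hA)
  have hBi : Integrable (B.indicator (fun _ => (1 : ℝ))) π :=
    (integrable_const 1).indicator (hm₂ _ hB)
  set c := π[A.indicator (fun _ => (1 : ℝ)) | m'] with hc
  have hci : Integrable c π := integrable_condExp
  have hcB : c * B.indicator (fun _ => (1 : ℝ)) = B.indicator c := by
    ext x; by_cases hx : x ∈ B <;> simp [hx]
  have hcBi : Integrable (c * B.indicator (fun _ => (1 : ℝ))) π := by
    rw [hcB]; exact hci.indicator (hm₂ _ hB)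
  have h1 : π[c * B.indicator (fun _ => (1 : ℝ)) | m'] =ᵐ[π]
      c * π[B.indicator (fun _ => (1 : ℝ)) | m'] :=
    condExp_mul_of_stronglyMeasurable_left stronglyMeasurable_condExp hcBi hBi
  have h2 : ∫ x, (A ∩ B).indicator (fun _ => (1 : ℝ)) x ∂π
      = ∫ x, (c * B.indicator (fun _ => (1 : ℝ))) x ∂π := by
    rw [← integral_condExp hm', ← integral_condExp hm' (f := c * _)]
    exact integral_congr_ae ((h A B hA hB).trans h1.symm)
  rw [integral_sub hAi.integrableOn hci.integrableOn, sub_eq_zero,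
    ← integral_indicator (hm₂ _ hB), ← integral_indicator (hm₂ _ hB), ← hcB, ← h2,
    Set.indicator_indicator, Set.inter_comm]

/-- Conditional independence makes an `m₂`-measurable function centred given `m'` orthogonal to
every `m₁`-measurable function. -/
theorem CondIndepOn.integral_mul_eq_zero {Ω : Type*} {m' m₁ m₂ mΩ : MeasurableSpace Ω}
    {π : Measure Ω} [IsProbabilityMeasure π] (h : CondIndepOn π m' m₁ m₂)
    (hm' : m' ≤ mΩ) (hm₁ : m₁ ≤ mΩ) (hm₂ : m₂ ≤ mΩ) {a b : Ω → ℝ}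
    (ha : Integrable a π) (ham : Measurable[m₂] a)
    (hS : ∀ S, MeasurableSet[m'] S → ∫ x in S, a x ∂π = 0) (hb : Measurable[m₁] b)
    (hab : Integrable (fun x => a x * b x) π) : ∫ x, a x * b x ∂π = 0 := by
  refine integral_mul_eq_zero_of_setIntegral_eq_zero hm₁ ha (fun A hA => ?_) hb hab
  set c := π[A.indicator (fun _ => (1 : ℝ)) | m'] with hc
  have hAi : Integrable (A.indicator (fun _ => (1 : ℝ))) π :=
    (integrable_const 1).indicator (hm₁ _ hA)
  have hci : Integrable c π := integrable_condExp
  have hcb : ∀ᵐ x ∂π, |c x| ≤ 1 := by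
    refine ae_bdd_abs_condExp_of_ae_bdd_abs (R := 1) (ae_of_all _ fun x => ?_)
    by_cases hx : x ∈ A <;> simp [hx]
  have hac : Integrable (fun x => a x * c x) π := by
    refine ha.mul_bdd (c := 1) ?_ ?_
    · exact hci.1
    · filter_upwards [hcb] with x hx using by simpa using hx
  have hA2 : Integrable (fun x => a x * A.indicator (fun _ => (1 : ℝ)) x) π := by
    refine ha.mul_bdd (c := 1) hAi.1 (ae_of_all _ fun x => ?_)
    by_cases hx : x ∈ A <;> simp [hx]
  have h1 : ∫ x, a x * c x ∂π = 0 :=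
    integral_mul_eq_zero_of_setIntegral_eq_zero hm' ha hS
      stronglyMeasurable_condExp.measurable hac
  have h2 : ∫ x, (A.indicator (fun _ => (1 : ℝ)) x - c x) * a x ∂π = 0 := by
    refine integral_mul_eq_zero_of_setIntegral_eq_zero hm₂ (hAi.sub hci)
      (fun B hB => h.setIntegral_sub_condExp hm' hm₁ hm₂ hA hB) ham ?_
    refine (hA2.sub hac).congr (ae_of_all _ fun x => ?_)
    simp only [Pi.sub_apply]; ring
  rw [← integral_indicator (hm₁ _ hA)]
  have h3 : ∀ x, A.indicator a x
      = (A.indicator (fun _ => (1 : ℝ)) x - c x) * a x + a x * c x := by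
    intro x; by_cases hx : x ∈ A <;> simp [hx] <;> ring
  simp_rw [h3]
  rw [integral_add _ hac, h1, h2, add_zero]
  refine (hA2.sub hac).congr (ae_of_all _ fun x => ?_)
  simp only [Pi.sub_apply]; ring

/-- If every event of `m₁` agrees almost surely with one of `m'`, then `m₁` is conditionally
independent of any `σ`-algebra given `m'`. -/
theorem condIndepOn_of_ae_eq {Ω : Type*} {m' m₁ m₂ mΩ : MeasurableSpace Ω}
    {π : Measure Ω} [IsProbabilityMeasure π]
    (hm' : m' ≤ mΩ) (hm₂ : m₂ ≤ mΩ)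
    (h : ∀ A, MeasurableSet[m₁] A → ∃ A', MeasurableSet[m'] A' ∧ A =ᵐ[π] A') :
    CondIndepOn π m' m₁ m₂ := by
  intro A B hA hB
  obtain ⟨A', hA', hAA'⟩ := h A hA
  have hBi : Integrable (B.indicator (fun _ => (1 : ℝ))) π :=
    (integrable_const 1).indicator (hm₂ _ hB)
  have e1 : (A ∩ B).indicator (fun _ => (1 : ℝ)) =ᵐ[π]
      A'.indicator (fun _ => (1 : ℝ)) * B.indicator (fun _ => (1 : ℝ)) := by
    have : (A ∩ B : Set Ω) =ᵐ[π] (A' ∩ B : Set Ω) := hAA'.inter (EventuallyEq.refl _ _)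
    refine (indicator_ae_eq_of_ae_eq_set this).trans (Eq.eventuallyEq ?_)
    ext x; by_cases hx : x ∈ A' <;> by_cases hx' : x ∈ B <;> simp [hx, hx']
  have hA'm : StronglyMeasurable[m'] (A'.indicator (fun _ => (1 : ℝ))) :=
    stronglyMeasurable_const.indicator hA'
  have e2 : π[A.indicator (fun _ => (1 : ℝ)) | m'] =ᵐ[π] A'.indicator (fun _ => (1 : ℝ)) := by
    refine (condExp_congr_ae (indicator_ae_eq_of_ae_eq_set hAA')).trans (Eq.eventuallyEq ?_)
    exact condExp_of_stronglyMeasurable hm' hA'm ((integrable_const 1).indicator (hm' _ hA'))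
  have hABi : Integrable (A'.indicator (fun _ => (1 : ℝ)) * B.indicator (fun _ => (1 : ℝ))) π :=
    ((integrable_const 1).indicator (hm' _ hA' |>.inter (hm₂ _ hB))).congr
      (Eq.eventuallyEq (by
        ext x; by_cases hx : x ∈ A' <;> by_cases hx' : x ∈ B <;> simp [hx, hx']))
  refine (condExp_congr_ae e1).trans
    ((condExp_mul_of_stronglyMeasurable_left hA'm hABi hBi).trans ?_)
  exact e2.symm.mul (EventuallyEq.refl _ _)

theorem memLp_ofReal_iff {Ω : Type*} {mΩ : MeasurableSpace Ω} {μ : Measure Ω} {r : ℝ} (hr : 0 < r)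
    {a : Ω → ℝ} (ha : AEStronglyMeasurable a μ) :
    MemLp a (ENNReal.ofReal r) μ ↔ Integrable (fun x => |a x| ^ r) μ := by
  rw [← integrable_norm_rpow_iff ha (by simpa using hr) ENNReal.ofReal_ne_top,
    ENNReal.toReal_ofReal hr.le]
  rfl

theorem MeasureTheory.MemLp.integrable_abs_rpow {Ω : Type*} {mΩ : MeasurableSpace Ω}
    {μ : Measure Ω} {r : ℝ} (hr : 0 < r) {a : Ω → ℝ} (ha : MemLp a (ENNReal.ofReal r) μ) :
    Integrable (fun x => |a x| ^ r) μ :=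
  (memLp_ofReal_iff hr ha.1).1 ha

theorem MeasureTheory.MemLp.integrable_of_one_le {Ω : Type*} {mΩ : MeasurableSpace Ω}
    {μ : Measure Ω} [IsFiniteMeasure μ] {r : ℝ} (hr : 1 ≤ r) {a : Ω → ℝ}
    (ha : MemLp a (ENNReal.ofReal r) μ) : Integrable a μ :=
  ha.integrable (by simpa using ENNReal.ofReal_le_ofReal hr)

/-- The odd power `t ↦ sign t * |t| ^ r`. -/
def signedPow (r t : ℝ) : ℝ := max t 0 ^ r - max (-t) 0 ^ r

theorem signedPow_of_nonneg {r t : ℝ} (hr : 0 < r) (ht : 0 ≤ t) : signedPow r t = t ^ r := by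
  simp [signedPow, ht, Real.zero_rpow hr.ne']

theorem signedPow_neg (r t : ℝ) : signedPow r (-t) = -signedPow r t := by
  simp [signedPow]

theorem signedPow_of_nonpos {r t : ℝ} (hr : 0 < r) (ht : t ≤ 0) :
    signedPow r t = -(-t) ^ r := by
  rw [← signedPow_of_nonneg hr (neg_nonneg.2 ht), signedPow_neg, neg_neg]

theorem abs_signedPow {r : ℝ} (hr : 0 < r) (t : ℝ) : |signedPow r t| = |t| ^ r := by
  rcases le_total 0 t with ht | ht
  · rw [signedPow_of_nonneg hr ht, abs_of_nonneg ht, abs_of_nonneg (Real.rpow_nonneg ht _)]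
  · rw [signedPow_of_nonpos hr ht, abs_of_nonpos ht, abs_neg,
      abs_of_nonneg (Real.rpow_nonneg (neg_nonneg.2 ht) _)]

theorem mul_signedPow {r : ℝ} (hr : 0 < r) (t : ℝ) : t * signedPow r t = |t| ^ (r + 1) := by
  rcases le_total 0 t with ht | ht
  · rw [signedPow_of_nonneg hr ht, abs_of_nonneg ht, Real.rpow_add_one' ht (by positivity),
      mul_comm]
  · rw [signedPow_of_nonpos hr ht, abs_of_nonpos ht,
      Real.rpow_add_one' (neg_nonneg.2 ht) (by positivity)]
    ring

theorem continuous_signedPow {r : ℝ} (hr : 0 < r) : Continuous (signedPow r) := by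
  unfold signedPow
  exact ((continuous_id.max continuous_const).rpow_const fun _ => Or.inr hr.le).sub
    ((continuous_neg.max continuous_const).rpow_const fun _ => Or.inr hr.le)

theorem strictMono_signedPow {r : ℝ} (hr : 0 < r) : StrictMono (signedPow r) := by
  intro s t hst
  unfold signedPow
  have h1 : max s 0 ^ r ≤ max t 0 ^ r :=
    Real.rpow_le_rpow (le_max_right _ _) (max_le_max hst.le le_rfl) hr.le
  have h2 : max (-t) 0 ^ r ≤ max (-s) 0 ^ r :=
    Real.rpow_le_rpow (le_max_right _ _) (max_le_max (neg_le_neg hst.le) le_rfl) hr.le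
  rcases lt_or_ge 0 t with ht | ht
  · have : max s 0 ^ r < max t 0 ^ r :=
      Real.rpow_lt_rpow (le_max_right _ _) (by rw [max_eq_left ht.le]; exact max_lt hst ht) hr
    linarith
  · have : max (-t) 0 ^ r < max (-s) 0 ^ r :=
      Real.rpow_lt_rpow (le_max_right _ _)
        (by rw [max_eq_left (by linarith : 0 ≤ -t), max_eq_left (by linarith : 0 ≤ -s)]
            linarith) hr
    linarith

theorem integrable_signedPow_sub {κ : Measure ℝ} [IsProbabilityMeasure κ] {r : ℝ} (hr : 0 < r)
    (h : Integrable (fun y : ℝ => |y| ^ (r + 1)) κ) (c : ℝ) :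
    Integrable (fun y => signedPow r (y - c)) κ := by
  have h1 : MemLp (fun y : ℝ => y) (ENNReal.ofReal (r + 1)) κ :=
    (memLp_ofReal_iff (by positivity) measurable_id.aestronglyMeasurable).2 h
  have h2 : MemLp (fun y : ℝ => y - c) (ENNReal.ofReal (r + 1)) κ := h1.sub (memLp_const c)
  have h3 : MemLp (fun y : ℝ => y - c) (ENNReal.ofReal r) κ :=
    h2.mono_exponent (ENNReal.ofReal_le_ofReal (by linarith))
  refine (h3.integrable_abs_rpow hr).mono'
    ((continuous_signedPow hr).comp (continuous_sub_right c)).aestronglyMeasurable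
    (ae_of_all _ fun y => ?_)
  rw [Real.norm_eq_abs, abs_signedPow hr]

theorem exists_integral_signedPow_sub_neg {κ : Measure ℝ} [IsProbabilityMeasure κ] {r : ℝ}
    (hr : 0 < r) (h : Integrable (fun y : ℝ => |y| ^ (r + 1)) κ) :
    ∃ c, ∫ y, signedPow r (y - c) ∂κ < 0 := by
  have h0 : Integrable (fun y : ℝ => |y| ^ r) κ := by
    have := (integrable_signedPow_sub hr h 0).abs
    simpa [abs_signedPow hr] using this
  have hmeas : ∀ n : ℕ, AEStronglyMeasurable
      (fun y : ℝ => max (y - n) 0 ^ r - min 1 (max (n - y) 0 ^ r)) κ := by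
    intro n
    refine Continuous.aestronglyMeasurable ?_
    refine Continuous.sub ?_ (continuous_const.min ?_)
    · exact ((continuous_sub_right _).max continuous_const).rpow_const fun _ => Or.inr hr.le
    · exact ((continuous_sub_left _).max continuous_const).rpow_const fun _ => Or.inr hr.le
  have hbound : ∀ (n : ℕ) (y : ℝ),
      ‖max (y - n) 0 ^ r - min 1 (max (n - y) 0 ^ r)‖ ≤ |y| ^ r + 1 := by
    intro n y
    have a1 : max (y - n) 0 ^ r ≤ |y| ^ r :=
      Real.rpow_le_rpow (le_max_right _ _)
        (max_le (by linarith [le_abs_self y, (Nat.cast_nonneg n : (0 : ℝ) ≤ n)]) (abs_nonneg _))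
        hr.le
    have a2 : 0 ≤ max (y - n) 0 ^ r := Real.rpow_nonneg (le_max_right _ _) _
    have a3 : 0 ≤ max (n - y) 0 ^ r := Real.rpow_nonneg (le_max_right _ _) _
    have a4 : min 1 (max (n - y) 0 ^ r) ≤ 1 := min_le_left _ _
    have a5 : 0 ≤ min 1 (max (n - y) 0 ^ r) := le_min zero_le_one a3
    rw [Real.norm_eq_abs, abs_le]
    constructor <;> linarith
  have hdom := h0.add (integrable_const (1 : ℝ))
  have key : Tendsto (fun n : ℕ => ∫ y, (max (y - n) 0 ^ r - min 1 (max (n - y) 0 ^ r)) ∂κ)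
      atTop (nhds (∫ _, (-1 : ℝ) ∂κ)) := by
    refine tendsto_integral_of_dominated_convergence _ hmeas hdom
      (fun n => ae_of_all _ (hbound n)) (ae_of_all _ fun y => ?_)
    refine tendsto_const_nhds.congr' ?_
    obtain ⟨m, hm⟩ := exists_nat_ge (y + 1)
    filter_upwards [eventually_ge_atTop m] with n hn
    have hn' : (m : ℝ) ≤ n := by exact_mod_cast hn
    rw [max_eq_right (by linarith), Real.zero_rpow hr.ne', max_eq_left (by linarith),
      min_eq_left (Real.one_le_rpow (by linarith) hr.le)]
    ring
  have hlt : (∫ _, (-1 : ℝ) ∂κ) < 0 := by simp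
  obtain ⟨n, hn⟩ := (key.eventually (gt_mem_nhds hlt)).exists
  refine ⟨n, lt_of_le_of_lt ?_ hn⟩
  refine integral_mono (integrable_signedPow_sub hr h n) ?_ (fun y => ?_)
  · exact hdom.mono' (hmeas n) (ae_of_all _ (hbound n))
  · simp only [signedPow, neg_sub]
    linarith [min_le_right (1 : ℝ) (max (n - y) 0 ^ r)]

/-- The integrated odd power has a unique root, which separates its sign. -/
theorem exists_root_integral_signedPow {κ : Measure ℝ} [IsProbabilityMeasure κ] {r : ℝ}
    (hr : 0 < r) (h : Integrable (fun y : ℝ => |y| ^ (r + 1)) κ) :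
    ∃ c, ∫ y, signedPow r (y - c) ∂κ = 0 ∧
      ∀ c', ∫ y, signedPow r (y - c') ∂κ ≤ 0 ↔ c ≤ c' := by
  set G : ℝ → ℝ := fun c => ∫ y, signedPow r (y - c) ∂κ with hG
  have hcont : Continuous G := by
    rw [continuous_iff_continuousAt]
    intro c
    have hb := (integrable_signedPow_sub hr h (c + 1)).abs.add
      (integrable_signedPow_sub hr h (c - 1)).abs
    refine tendsto_integral_filter_of_dominated_convergence _ (Eventually.of_forall fun c' => ?_)
      ?_ hb (ae_of_all _ fun y => ?_)
    · exact ((continuous_signedPow hr).comp (continuous_sub_right c')).aestronglyMeasurable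
    · filter_upwards [Icc_mem_nhds (by linarith : c - 1 < c) (by linarith : c < c + 1)] with c' hc'
      refine ae_of_all _ fun y => ?_
      have m1 := (strictMono_signedPow hr).monotone (by linarith [hc'.2] : y - (c + 1) ≤ y - c')
      have m2 := (strictMono_signedPow hr).monotone (by linarith [hc'.1] : y - c' ≤ y - (c - 1))
      simp only [Pi.add_apply]
      rw [Real.norm_eq_abs, abs_le]
      constructor <;>
        linarith [neg_abs_le (signedPow r (y - (c + 1))), abs_nonneg (signedPow r (y - (c - 1))),
          le_abs_self (signedPow r (y - (c - 1))), abs_nonneg (signedPow r (y - (c + 1)))]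
    · exact ((continuous_signedPow hr).comp (continuous_sub_left y)).tendsto c
  have hanti : StrictAnti G := by
    intro c c' hcc'
    have hpos : ∀ y, 0 < signedPow r (y - c) - signedPow r (y - c') := fun y =>
      sub_pos.2 (strictMono_signedPow hr (by linarith))
    have hi := (integrable_signedPow_sub hr h c).sub (integrable_signedPow_sub hr h c')
    have := (integral_pos_iff_support_of_nonneg (fun y => (hpos y).le) hi).2 (by
      have : Function.support (fun y => signedPow r (y - c) - signedPow r (y - c')) = Set.univ :=
        Set.eq_univ_of_forall fun y => (hpos y).ne'
      erw [this]; simp)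
    rw [integral_sub (integrable_signedPow_sub hr h c) (integrable_signedPow_sub hr h c')] at this
    exact sub_pos.1 this
  obtain ⟨c₁, hc₁⟩ := exists_integral_signedPow_sub_neg hr h
  obtain ⟨c₂, hc₂⟩ : ∃ c, 0 < G c := by
    have hmeas : Measurable (fun y : ℝ => -y) := measurable_neg
    have : IsProbabilityMeasure (κ.map (fun y : ℝ => -y)) :=
      Measure.isProbabilityMeasure_map hmeas.aemeasurable
    have h' : Integrable (fun y : ℝ => |y| ^ (r + 1)) (κ.map (fun y : ℝ => -y)) := by
      rw [integrable_map_measure 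
        (continuous_abs.rpow_const fun _ => Or.inr (by positivity)).aestronglyMeasurable
        hmeas.aemeasurable]
      simpa [Function.comp_def] using h
    obtain ⟨c, hc⟩ := exists_integral_signedPow_sub_neg hr h'
    have hsm : AEStronglyMeasurable (fun y => signedPow r (y - c)) (κ.map (fun y : ℝ => -y)) :=
      ((continuous_signedPow hr).comp (continuous_sub_right c)).aestronglyMeasurable
    rw [integral_map hmeas.aemeasurable hsm] at hc
    refine ⟨-c, ?_⟩
    have e : ∀ y, signedPow r (-y - c) = -signedPow r (y - -c) := by
      intro y; rw [← signedPow_neg]; congr 1; ring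
    simp_rw [e, integral_neg] at hc
    simp only [hG]; linarith
  have hlt : c₂ ≤ c₁ := by
    by_contra! hlt
    have := hanti hlt
    simp only [hG] at this hc₂
    linarith
  obtain ⟨c, -, hc⟩ := intermediate_value_Icc' hlt hcont.continuousOn
    (show (0 : ℝ) ∈ Icc (G c₁) (G c₂) from ⟨hc₁.le, hc₂.le⟩)
  refine ⟨c, hc, fun c' => ?_⟩
  change G c' ≤ 0 ↔ c ≤ c'
  rw [← hc]
  exact hanti.le_iff_ge

theorem integral_abs_sub_root_rpow_le {κ : Measure ℝ} [IsProbabilityMeasure κ] {r : ℝ}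
    (hr : 0 < r) (h : Integrable (fun y : ℝ => |y| ^ (r + 1)) κ) {c : ℝ}
    (hc : ∫ y, signedPow r (y - c) ∂κ = 0) :
    Integrable (fun y : ℝ => |y - c| ^ (r + 1)) κ ∧
      ∫ y, |y - c| ^ (r + 1) ∂κ ≤ ∫ y, |y| ^ (r + 1) ∂κ := by
  have h1 : MemLp (fun y : ℝ => y) (ENNReal.ofReal (r + 1)) κ :=
    (memLp_ofReal_iff (by positivity) measurable_id.aestronglyMeasurable).2 h
  have h2 : Integrable (fun y : ℝ => |y - c| ^ (r + 1)) κ :=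
    (h1.sub (memLp_const c)).integrable_abs_rpow (by positivity)
  refine ⟨h2, ?_⟩
  have hconj : (r + 1).HolderConjugate ((r + 1) / r) :=
    (Real.holderConjugate_iff_eq_conjExponent (by linarith)).2 (by simp)
  have hpt : ∀ y : ℝ, |y - c| ^ (r + 1) ≤
      |y| ^ (r + 1) / (r + 1) + |y - c| ^ (r + 1) / ((r + 1) / r) - c * signedPow r (y - c) := by
    intro y
    have e : |y| * |signedPow r (y - c)| ≤
        |y| ^ (r + 1) / (r + 1) + |signedPow r (y - c)| ^ ((r + 1) / r) / ((r + 1) / r) :=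
      Real.young_inequality_of_nonneg (abs_nonneg _) (abs_nonneg _) hconj
    rw [abs_signedPow hr, ← Real.rpow_mul (abs_nonneg _), mul_div_cancel₀ _ hr.ne',
      ← abs_signedPow hr, ← abs_mul] at e
    have := mul_signedPow hr (y - c)
    nlinarith [le_abs_self (y * signedPow r (y - c))]
  have hψ := integrable_signedPow_sub hr h c
  have hA := h.div_const (r + 1)
  have hB := h2.div_const ((r + 1) / r)
  have hAB : Integrable
      (fun y : ℝ => |y| ^ (r + 1) / (r + 1) + |y - c| ^ (r + 1) / ((r + 1) / r)) κ := hA.add hB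
  have hI : ∫ y, |y - c| ^ (r + 1) ∂κ ≤ ∫ y, (|y| ^ (r + 1) / (r + 1)
      + |y - c| ^ (r + 1) / ((r + 1) / r) - c * signedPow r (y - c)) ∂κ :=
    integral_mono h2 (hAB.sub (hψ.const_mul c)) hpt
  rw [integral_sub hAB (hψ.const_mul c), integral_add hA hB, integral_const_mul, hc,
    integral_div, integral_div, mul_zero, sub_zero] at hI
  have e1 : (∫ y, |y - c| ^ (r + 1) ∂κ) / ((r + 1) / r)
      = (∫ y, |y - c| ^ (r + 1) ∂κ) - (∫ y, |y - c| ^ (r + 1) ∂κ) / (r + 1) := by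
    field_simp; ring
  rw [e1] at hI
  have : (∫ y, |y - c| ^ (r + 1) ∂κ) / (r + 1) ≤ (∫ y, |y| ^ (r + 1) ∂κ) / (r + 1) := by linarith
  exact (div_le_div_iff_of_pos_right (by positivity)).1 this

/-- Existence of the conditional `L^(r+1)`-projection on functions of `T`, characterised by its
first order condition. -/
theorem exists_condProj {Ω β : Type*} {mΩ : MeasurableSpace Ω} {mβ : MeasurableSpace β}
    {μ : Measure Ω} [IsProbabilityMeasure μ] {T : Ω → β} (hT : Measurable T) {g : Ω → ℝ}
    (hg : Measurable g) {r : ℝ} (hr : 0 < r) (hgL : MemLp g (ENNReal.ofReal (r + 1)) μ) :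
    ∃ H : β → ℝ, Measurable H ∧ MemLp (fun x => H (T x)) (ENNReal.ofReal (r + 1)) μ ∧
      ∀ S, MeasurableSet S → ∫ x in T ⁻¹' S, signedPow r (g x - H (T x)) ∂μ = 0 := by
  have hr1 : 0 < r + 1 := by positivity
  set κ := ProbabilityTheory.condDistrib g T μ with hκ
  have hcomp : (μ.map T).compProd κ = μ.map (fun a => (T a, g a)) :=
    ProbabilityTheory.compProd_map_condDistrib hg.aemeasurable
  have hTg : Measurable (fun a => (T a, g a)) := hT.prodMk hg
  have : IsProbabilityMeasure (μ.map T) := Measure.isProbabilityMeasure_map hT.aemeasurable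
  have hpowm : Measurable (fun y : ℝ => |y| ^ (r + 1)) := by fun_prop
  let good : Set β := {b | ∫⁻ y, ENNReal.ofReal (|y| ^ (r + 1)) ∂κ b < ∞}
  have hgoodm : MeasurableSet good :=
    measurableSet_lt (hpowm.ennreal_ofReal.lintegral_kernel) measurable_const
  have hgood : ∀ b ∈ good, Integrable (fun y : ℝ => |y| ^ (r + 1)) (κ b) := by
    intro b hb
    refine ⟨hpowm.aestronglyMeasurable, ?_⟩
    rw [hasFiniteIntegral_iff_ofReal (ae_of_all _ fun y => by positivity)]
    exact hb
  have hlin : ∫⁻ b, ∫⁻ y, ENNReal.ofReal (|y| ^ (r + 1)) ∂κ b ∂(μ.map T)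
      = ∫⁻ x, ENNReal.ofReal (|g x| ^ (r + 1)) ∂μ := by
    rw [← Measure.lintegral_compProd (f := fun z : β × ℝ => ENNReal.ofReal (|z.2| ^ (r + 1)))
      (by fun_prop), hcomp, lintegral_map (by fun_prop) hTg]
  have hfin : ∫⁻ x, ENNReal.ofReal (|g x| ^ (r + 1)) ∂μ < ∞ := by
    have := (hgL.integrable_abs_rpow hr1).2
    rwa [hasFiniteIntegral_iff_ofReal (ae_of_all _ fun y => by positivity)] at this
  have hgoodae : ∀ᵐ b ∂(μ.map T), b ∈ good :=
    ae_lt_top (hpowm.ennreal_ofReal.lintegral_kernel) (by rw [hlin]; exact hfin.ne)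
  choose! H₀ hH₀ using fun b (hb : b ∈ good) => exists_root_integral_signedPow hr (hgood b hb)
  classical
  let H : β → ℝ := good.indicator H₀
  have hHg : ∀ b ∈ good, H b = H₀ b := fun b hb => indicator_of_mem hb _
  have hHm : Measurable H := by
    refine measurable_of_Iic fun c => ?_
    have hGm : Measurable (fun b => ∫ y, signedPow r (y - c) ∂κ b) :=
      (((continuous_signedPow hr).comp
        (continuous_sub_right c)).stronglyMeasurable.integral_kernel).measurable
    have : H ⁻¹' Iic c = (good ∩ {b | ∫ y, signedPow r (y - c) ∂κ b ≤ 0}) ∪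
        (goodᶜ ∩ {_b | 0 ≤ c}) := by
      ext b
      by_cases hb : b ∈ good
      · simp [hb, hHg b hb, (hH₀ b hb).2 c]
      · simp [hb, H]
    rw [this]
    exact (hgoodm.inter (measurableSet_le hGm measurable_const)).union
      (hgoodm.compl.inter (MeasurableSet.const _))
  have hdm : Measurable (fun z : β × ℝ => z.2 - H z.1) :=
    measurable_snd.sub (hHm.comp measurable_fst)
  have hdiff : MemLp (fun x => g x - H (T x)) (ENNReal.ofReal (r + 1)) μ := by
    rw [memLp_ofReal_iff hr1 (by fun_prop)]
    refine ⟨(hpowm.comp (hg.sub (hHm.comp hT))).aestronglyMeasurable, ?_⟩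
    rw [hasFiniteIntegral_iff_ofReal (ae_of_all _ fun y => by positivity)]
    refine lt_of_le_of_lt ?_ hfin
    have e : ∫⁻ x, ENNReal.ofReal (|g x - H (T x)| ^ (r + 1)) ∂μ
        = ∫⁻ b, ∫⁻ y, ENNReal.ofReal (|y - H b| ^ (r + 1)) ∂κ b ∂(μ.map T) := by
      rw [← Measure.lintegral_compProd
        (f := fun z : β × ℝ => ENNReal.ofReal (|z.2 - H z.1| ^ (r + 1))) (by fun_prop),
        hcomp, lintegral_map (by fun_prop) hTg]
    rw [e, ← hlin]
    refine lintegral_mono_ae ?_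
    filter_upwards [hgoodae] with b hb
    obtain ⟨hi, hle⟩ := integral_abs_sub_root_rpow_le hr (hgood b hb) (hH₀ b hb).1
    rw [hHg b hb, ← ofReal_integral_eq_lintegral_ofReal hi (ae_of_all _ fun y => by positivity),
      ← ofReal_integral_eq_lintegral_ofReal (hgood b hb) (ae_of_all _ fun y => by positivity)]
    exact ENNReal.ofReal_le_ofReal hle
  refine ⟨H, hHm, ?_, fun S hS => ?_⟩
  · have := hgL.sub hdiff
    refine this.ae_eq (ae_of_all _ fun x => ?_)
    simp
  have hψ : Integrable (fun x => signedPow r (g x - H (T x))) μ := by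
    refine ((hdiff.mono_exponent
      (ENNReal.ofReal_le_ofReal (by linarith : r ≤ r + 1))).integrable_abs_rpow hr).mono'
      ((continuous_signedPow hr).measurable.comp (by fun_prop)).aestronglyMeasurable
      (ae_of_all _ fun x => ?_)
    rw [Real.norm_eq_abs, abs_signedPow hr]
  let F : β × ℝ → ℝ := fun z => S.indicator (fun _ => (1 : ℝ)) z.1 * signedPow r (z.2 - H z.1)
  have hFm : Measurable F :=
    ((measurable_const.indicator hS).comp measurable_fst).mul
      ((continuous_signedPow hr).measurable.comp hdm)
  have hFe : ∀ x, F (T x, g x)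
      = (T ⁻¹' S).indicator (fun x => signedPow r (g x - H (T x))) x := by
    intro x; by_cases hx : T x ∈ S <;> simp [F, hx]
  have hFi : Integrable F (μ.map (fun a => (T a, g a))) := by
    rw [integrable_map_measure hFm.aestronglyMeasurable hTg.aemeasurable]
    exact (hψ.indicator (hT hS)).congr (ae_of_all _ fun x => (hFe x).symm)
  rw [← integral_indicator (hT hS), ← integral_congr_ae (ae_of_all _ hFe),
    ← integral_map (φ := fun a => (T a, g a)) hTg.aemeasurable hFm.aestronglyMeasurable, ← hcomp,
    Measure.integral_compProd (by rwa [hcomp])]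
  refine integral_eq_zero_of_ae ?_
  filter_upwards [hgoodae] with b hb
  simp only [F, integral_const_mul, hHg b hb, (hH₀ b hb).1, mul_zero, Pi.zero_apply]

/-- The path which agrees with `x` up to time `n` and vanishes afterwards. -/
def trunc {N d : ℕ} (n : ℕ) (x : PathD N d) : PathD N d :=
  fun i => if (i : ℕ) + 1 ≤ n then x i else 0

theorem trunc_apply_of_lt {N d : ℕ} {n : ℕ} (x : PathD N d) {i : Fin N} (h : (i : ℕ) < n) :
    trunc n x i = x i := if_pos h

theorem trunc_trunc {N d : ℕ} {m n : ℕ} (h : m ≤ n) (x : PathD N d) :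
    trunc m (trunc n x) = trunc m x := by
  funext i
  unfold trunc
  split_ifs <;> first | rfl | omega

theorem trunc_self {N d : ℕ} (x : PathD N d) : trunc N x = x :=
  funext fun i => trunc_apply_of_lt x i.2

theorem trunc_eq_of_le {N d : ℕ} {m n : ℕ} (h : m ≤ n) {x y : PathD N d}
    (hxy : trunc n x = trunc n y) : trunc m x = trunc m y := by
  rw [← trunc_trunc h x, hxy, trunc_trunc h y]

theorem measurable_trunc {N d : ℕ} (n : ℕ) : Measurable (trunc n : PathD N d → PathD N d) := by
  refine measurable_pi_lambda _ fun i => ?_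
  unfold trunc
  split_ifs
  · exact measurable_pi_apply i
  · exact measurable_const

theorem Fn_eq_comap_trunc (N d n : ℕ) : Fn N d n = MeasurableSpace.comap (trunc n) inferInstance :=
  rfl

theorem Fn_le (N d n : ℕ) : Fn N d n ≤ (inferInstance : MeasurableSpace (PathD N d)) :=
  (measurable_trunc n).comap_le

theorem Fn_mono (N d : ℕ) {m n : ℕ} (h : m ≤ n) : Fn N d m ≤ Fn N d n := by
  rintro _ ⟨S, hS, rfl⟩
  refine ⟨trunc m ⁻¹' S, measurable_trunc m hS, ?_⟩
  ext x
  change trunc m (trunc n x) ∈ S ↔ trunc m x ∈ S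
  rw [trunc_trunc h]

theorem Fn_self (N d : ℕ) : Fn N d N = (inferInstance : MeasurableSpace (PathD N d)) := by
  rw [Fn_eq_comap_trunc, show (trunc N : PathD N d → PathD N d) = id from funext trunc_self,
    MeasurableSpace.comap_id]

theorem measurable_Fn_iff {N d n : ℕ} {β : Type*} [MeasurableSpace β] {F : PathD N d → β}
    (h : ∀ x, F (trunc n x) = F x) (hF : Measurable F) : Measurable[Fn N d n] F := by
  have : F = F ∘ trunc n := funext fun x => (h x).symm
  rw [this]
  exact hF.comp (comap_measurable (trunc n))

theorem apply_trunc_of_measurable {N d n : ℕ} {F : PathD N d → ℝ}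
    (hF : Measurable[Fn N d n] F) (x : PathD N d) : F (trunc n x) = F x := by
  obtain ⟨S, -, hS⟩ := hF (measurableSet_singleton (F x))
  have hx : trunc n x ∈ S := by
    have : x ∈ trunc n ⁻¹' S := by
      erw [hS]; simp
    exact this
  have : trunc n x ∈ trunc n ⁻¹' S := by
    change trunc n (trunc n x) ∈ S
    rwa [trunc_trunc le_rfl]
  erw [hS] at this
  exact this

theorem coord_succ {N d : ℕ} (x : PathD N d) (i : Fin N) : coord x ((i : ℕ) + 1) = x i := by
  unfold coord
  rw [dif_pos ⟨by omega, i.2⟩]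
  rfl

theorem coord_zero {N d : ℕ} (x : PathD N d) : coord x 0 = 0 := by simp [coord]

theorem coord_eq_prev {N d : ℕ} {n : ℕ} (h : 1 ≤ n ∧ n ≤ N) (x : PathD N d) :
    coord x n = x ⟨n - 1, by omega⟩ := dif_pos h

theorem coord_add {N d : ℕ} (x y : PathD N d) (n : ℕ) :
    coord (x + y) n = coord x n + coord y n := by
  unfold coord; split_ifs <;> simp

theorem coord_sub {N d : ℕ} (x y : PathD N d) (n : ℕ) :
    coord (x - y) n = coord x n - coord y n := by
  unfold coord; split_ifs <;> simp

theorem continuous_coord {N d : ℕ} (n : ℕ) : Continuous (fun x : PathD N d => coord x n) := by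
  unfold coord
  split_ifs
  · exact continuous_apply _
  · exact continuous_const

theorem coord_trunc {N d : ℕ} {m n : ℕ} (h : m ≤ n) (x : PathD N d) :
    coord (trunc n x) m = coord x m := by
  unfold coord
  split_ifs with h1
  · exact trunc_apply_of_lt x (by simp; omega)
  · rfl

theorem measurable_Fn_coord {N d : ℕ} {m n : ℕ} (h : m ≤ n) :
    Measurable[Fn N d n] (fun x : PathD N d => coord x m) :=
  measurable_Fn_iff (coord_trunc h) (continuous_coord m).measurable

/-- The `s.2`-th component of the increment of `z` at time `s.1 + 1`. -/
def inc {N d : ℕ} (s : Fin N × Fin d) (z : PathD N d) : ℝ :=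
  coord z (s.1 + 1) s.2 - coord z s.1 s.2

theorem inc_add {N d : ℕ} (s : Fin N × Fin d) (x y : PathD N d) :
    inc s (x + y) = inc s x + inc s y := by
  simp only [inc, coord_add, Pi.add_apply]; ring

theorem inc_sub {N d : ℕ} (s : Fin N × Fin d) (x y : PathD N d) :
    inc s (x - y) = inc s x - inc s y := by
  simp only [inc, coord_sub, Pi.sub_apply]; ring

theorem continuous_inc {N d : ℕ} (s : Fin N × Fin d) :
    Continuous (inc s : PathD N d → ℝ) :=
  ((continuous_apply s.2).comp (continuous_coord _)).sub
    ((continuous_apply s.2).comp (continuous_coord _))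

theorem measurable_Fn_inc {N d : ℕ} (s : Fin N × Fin d) :
    Measurable[Fn N d (s.1 + 1)] (inc s : PathD N d → ℝ) := by
  refine measurable_Fn_iff (fun x => ?_) (continuous_inc s).measurable
  rw [inc, inc, coord_trunc le_rfl, coord_trunc (Nat.le_succ _)]

theorem lpnorm_rpow {d : ℕ} {e : ℝ} (he : e ≠ 0) (v : Fin d → ℝ) :
    lpnorm e v ^ e = ∑ j, |v j| ^ e := by
  have h : 0 ≤ ∑ j, |v j| ^ e :=
    Finset.sum_nonneg fun j _ => Real.rpow_nonneg (abs_nonneg _) _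
  rw [lpnorm, ← Real.rpow_mul h, one_div_mul_cancel he, Real.rpow_one]

theorem sum_Icc_eq_sum_fin {M : Type*} [AddCommMonoid M] (N : ℕ) (g : ℕ → M) :
    ∑ n ∈ Finset.Icc 1 N, g n = ∑ i : Fin N, g (i + 1) := by
  rw [Fin.sum_univ_eq_sum_range (fun i => g (i + 1)) N, Finset.range_eq_Ico,
    Finset.sum_Ico_add' g 0 N 1]
  rfl

theorem cN_eq_sum {N d : ℕ} {p : ℝ} (hp : p ≠ 0) (x y : PathD N d) :
    cN p x y = ∑ s : Fin N × Fin d, |inc s (y - x)| ^ p := by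
  rw [cN, sum_Icc_eq_sum_fin, Fintype.sum_prod_type]
  refine Finset.sum_congr rfl fun i _ => ?_
  rw [lpnorm_rpow hp]
  refine Finset.sum_congr rfl fun j _ => ?_
  rw [inc_sub, abs_sub_comm]
  simp [inc]

theorem integral_apply {Ω : Type*} {mΩ : MeasurableSpace Ω} {μ : Measure Ω} {d : ℕ}
    {F : Ω → Fin d → ℝ} (hF : Integrable F μ) (j : Fin d) :
    (∫ x, F x ∂μ) j = ∫ x, F x j ∂μ :=
  eval_integral (fun i => hF.eval i) j

theorem IsMartingaleMeasure.integrable_coord {N d : ℕ} {μ : Measure (PathD N d)}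
    (h : IsMartingaleMeasure μ) (n : ℕ) : Integrable (fun x => coord x n) μ := by
  by_cases hn : 1 ≤ n ∧ n ≤ N
  · exact (h n hn.1 hn.2).1
  · have : (fun x : PathD N d => coord x n) = fun _ => 0 := by
      funext x; exact dif_neg hn
    rw [this]
    exact integrable_zero _ _ _

theorem IsMartingaleMeasure.integrable_inc {N d : ℕ} {μ : Measure (PathD N d)}
    (h : IsMartingaleMeasure μ) (s : Fin N × Fin d) : Integrable (inc s) μ :=
  ((h.integrable_coord _).eval s.2).sub ((h.integrable_coord _).eval s.2)

theorem IsMartingaleMeasure.setIntegral_inc {N d : ℕ} {μ : Measure (PathD N d)}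
    [IsProbabilityMeasure μ] (h : IsMartingaleMeasure μ) (s : Fin N × Fin d)
    {S : Set (PathD N d)} (hS : MeasurableSet[Fn N d s.1] S) : ∫ x in S, inc s x ∂μ = 0 := by
  have h1 := (h (s.1 + 1) (by omega) s.1.2).2
  have h2 : ∫ x in S, coord x (s.1 + 1) ∂μ = ∫ x in S, coord x s.1 ∂μ := by
    rw [← setIntegral_condExp (Fn_le N d s.1) (h.integrable_coord _) hS]
    exact setIntegral_congr_ae (Fn_le N d s.1 _ hS) (h1.mono fun x hx _ => hx)
  have h3 := congrFun h2 s.2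
  rw [integral_apply (h.integrable_coord _).integrableOn,
    integral_apply (h.integrable_coord _).integrableOn] at h3
  change ∫ x in S, (coord x (s.1 + 1) s.2 - coord x s.1 s.2) ∂μ = 0
  rw [integral_sub ((h.integrable_coord _).eval s.2).integrableOn
    ((h.integrable_coord _).eval s.2).integrableOn, h3, sub_self]

theorem IsMartingaleMeasure.of_setIntegral_inc {N d : ℕ} {μ : Measure (PathD N d)}
    [IsProbabilityMeasure μ] (hi : ∀ n, Integrable (fun x => coord x n) μ)
    (h : ∀ (s : Fin N × Fin d) (S : Set (PathD N d)), MeasurableSet[Fn N d s.1] S →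
      ∫ x in S, inc s x ∂μ = 0) : IsMartingaleMeasure μ := by
  intro n hn hnN
  refine ⟨hi n, (ae_eq_condExp_of_forall_setIntegral_eq (Fn_le N d _) (hi n)
    (fun _ _ _ => (hi _).integrableOn) (fun S hS _ => ?_)
    (measurable_Fn_coord le_rfl).stronglyMeasurable.aestronglyMeasurable).symm⟩
  ext j
  rw [integral_apply (hi _).integrableOn, integral_apply (hi _).integrableOn]
  have := h (⟨n - 1, by omega⟩, j) S hS
  simp only [inc, Nat.sub_add_cancel hn] at this
  rw [integral_sub ((hi _).eval j).integrableOn ((hi _).eval j).integrableOn] at this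
  linarith

theorem add_rpow_le_two_rpow_mul {a b e : ℝ} (ha : 0 ≤ a) (hb : 0 ≤ b) (he : 0 ≤ e) :
    (a + b) ^ e ≤ 2 ^ e * (a ^ e + b ^ e) := by
  have hm : max a b ^ e ≤ a ^ e + b ^ e := by
    rcases max_choice a b with h | h <;> rw [h]
    · linarith [Real.rpow_nonneg hb e]
    · linarith [Real.rpow_nonneg ha e]
  calc (a + b) ^ e ≤ (2 * max a b) ^ e :=
        Real.rpow_le_rpow (by positivity)
          (by linarith [le_max_left a b, le_max_right a b]) he
    _ = 2 ^ e * max a b ^ e := Real.mul_rpow (by norm_num) (le_max_of_le_left ha)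
    _ ≤ _ := by gcongr

theorem sum_integral_abs_mul_le {ι Ω : Type*} [Fintype ι] {mΩ : MeasurableSpace Ω}
    {μ : Measure Ω} {p q : ℝ} (hpq : p.HolderConjugate q) {a b : ι → Ω → ℝ}
    (ha : ∀ s, MemLp (a s) (ENNReal.ofReal p) μ) (hb : ∀ s, MemLp (b s) (ENNReal.ofReal q) μ) :
    ∑ s, ∫ x, |a s x * b s x| ∂μ
      ≤ (∑ s, ∫ x, |a s x| ^ p ∂μ) ^ (1 / p) * (∑ s, ∫ x, |b s x| ^ q ∂μ) ^ (1 / q) := by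
  have hA : ∀ s, 0 ≤ ∫ x, |a s x| ^ p ∂μ := fun s => integral_nonneg fun x => by positivity
  have hB : ∀ s, 0 ≤ ∫ x, |b s x| ^ q ∂μ := fun s => integral_nonneg fun x => by positivity
  calc ∑ s, ∫ x, |a s x * b s x| ∂μ
      ≤ ∑ s, (∫ x, |a s x| ^ p ∂μ) ^ (1 / p) * (∫ x, |b s x| ^ q ∂μ) ^ (1 / q) := by
        refine Finset.sum_le_sum fun s _ => ?_
        simpa [abs_mul] using integral_mul_norm_le_Lp_mul_Lq hpq (ha s) (hb s)
    _ ≤ _ := by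
        refine (Real.inner_le_Lp_mul_Lq _ _ _ hpq).trans (le_of_eq ?_)
        congr 2 <;> refine Finset.sum_congr rfl fun s _ => ?_
        · rw [abs_of_nonneg (by have := hA s; positivity), ← Real.rpow_mul (hA s),
            one_div_mul_cancel hpq.ne_zero, Real.rpow_one]
        · rw [abs_of_nonneg (by have := hB s; positivity), ← Real.rpow_mul (hB s),
            one_div_mul_cancel hpq.symm.ne_zero, Real.rpow_one]

theorem integrable_mul_of_memLp {Ω : Type*} {mΩ : MeasurableSpace Ω}
    {μ : Measure Ω} {p q : ℝ} (hpq : p.HolderConjugate q) {a b : Ω → ℝ}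
    (ha : MemLp a (ENNReal.ofReal p) μ) (hb : MemLp b (ENNReal.ofReal q) μ) :
    Integrable (fun x => a x * b x) μ := by
  have := hpq.ennrealOfReal
  exact ha.integrable_mul hb

theorem sum_ite_inc {N d : ℕ} (z : PathD N d) (k : Fin N) (j : Fin d) :
    ∑ i : Fin N, (if (i : ℕ) ≤ k then inc (i, j) z else 0) = z k j := by
  have h1 := Fin.sum_univ_eq_sum_range
    (fun i => if i ≤ (k : ℕ) then coord z (i + 1) j - coord z i j else 0) N
  simp only [inc]
  rw [h1, ← Finset.sum_filter]
  have h2 : (Finset.range N).filter (fun i => i ≤ (k : ℕ)) = Finset.range (k + 1) := by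
    ext i; have := k.2; simp; omega
  rw [h2, Finset.sum_range_sub (fun i => coord z i j), coord_succ, coord_zero]
  simp

theorem coord_DeltaInv {N d : ℕ} (y : PathD N d) (n : ℕ) :
    coord (DeltaInv y) n = ∑ k : Fin N, if (k : ℕ) < n ∧ n ≤ N then y k else 0 := by
  by_cases h : 1 ≤ n ∧ n ≤ N
  · rw [coord_eq_prev h]
    refine Finset.sum_congr rfl fun k _ => if_congr ?_ rfl rfl
    simp only []; omega
  · rw [coord, dif_neg h]
    refine (Finset.sum_eq_zero fun k _ => if_neg ?_).symm
    omega

theorem inc_DeltaInv {N d : ℕ} (y : PathD N d) (s : Fin N × Fin d) :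
    inc s (DeltaInv y) = y s.1 s.2 := by
  rw [inc, ← Pi.sub_apply, coord_DeltaInv, coord_DeltaInv, ← Finset.sum_sub_distrib,
    Finset.sum_eq_single s.1]
  · simp
  · intro k _ hk
    have := Fin.val_ne_of_ne hk
    have := s.1.2
    split_ifs <;> first | simp; done | omega
  · simp

theorem norm_le_sum_abs_inc {N d : ℕ} (z : PathD N d) : ‖z‖ ≤ ∑ s, |inc s z| := by
  have h0 : 0 ≤ ∑ s, |inc s z| := Finset.sum_nonneg fun s _ => abs_nonneg _
  refine (pi_norm_le_iff_of_nonneg h0).2 fun k => (pi_norm_le_iff_of_nonneg h0).2 fun j => ?_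
  rw [← sum_ite_inc z k j, Real.norm_eq_abs, Fintype.sum_prod_type]
  refine (Finset.abs_sum_le_sum_abs _ _).trans (Finset.sum_le_sum fun i _ => ?_)
  refine le_trans ?_
    (Finset.single_le_sum (f := fun j => |inc (i, j) z|) (fun _ _ => abs_nonneg _)
      (Finset.mem_univ j))
  split_ifs <;> simp

theorem norm_rpow_le_sum {N d : ℕ} {p : ℝ} (hp : 1 ≤ p) (z : PathD N d) :
    ‖z‖ ^ p ≤ (Fintype.card (Fin N × Fin d) : ℝ) ^ (p - 1) * ∑ s, |inc s z| ^ p :=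
  (Real.rpow_le_rpow (norm_nonneg _) (norm_le_sum_abs_inc z) (by linarith)).trans
    (Real.rpow_sum_le_const_mul_sum_rpow _ _ hp)

theorem abs_inc_le {N d : ℕ} (s : Fin N × Fin d) (z : PathD N d) : |inc s z| ≤ 2 * ‖z‖ := by
  have h : ∀ n, |coord z n s.2| ≤ ‖z‖ := by
    intro n
    unfold coord
    split_ifs
    · exact (norm_le_pi_norm (z _) s.2).trans (norm_le_pi_norm z _)
    · simp
  unfold inc
  refine (abs_sub _ _).trans ?_
  linarith [h (s.1 + 1), h s.1]

theorem fderiv_eq_sum_Dn_mul_inc {N d : ℕ} (f : PathD N d → ℝ) (x z : PathD N d) :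
    fderiv ℝ f x z = ∑ s : Fin N × Fin d, Dn f (s.1 + 1) x s.2 * inc s z := by
  have hz : z = ∑ k : Fin N, ∑ j : Fin d, z k j • (Pi.single k (Pi.single j 1) : PathD N d) := by
    ext k j
    simp only [Finset.sum_apply, Pi.smul_apply, smul_eq_mul]
    rw [Finset.sum_eq_single k, Finset.sum_eq_single j]
    · simp
    · intro j' _ hj'; simp [hj'.symm]
    · simp
    · intro k' _ hk'; simp [hk'.symm]
    · simp
  conv_lhs => rw [hz]
  simp only [map_sum, map_smul, smul_eq_mul, Dn, Finset.sum_mul]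
  rw [Fintype.sum_prod_type]
  simp_rw [← sum_ite_inc z]
  rw [Finset.sum_comm, Finset.sum_comm (s := (Finset.univ : Finset (Fin N)))]
  refine Finset.sum_congr rfl fun j _ => ?_
  simp_rw [Finset.sum_mul]
  rw [Finset.sum_comm]
  refine Finset.sum_congr rfl fun i _ => Finset.sum_congr rfl fun k _ => ?_
  simp only [Nat.add_le_add_iff_right]
  split_ifs <;> ring

theorem continuous_Dn {N d : ℕ} {f : PathD N d → ℝ} (hf : ContDiff ℝ 1 f) (n : ℕ) :
    Continuous (Dn f n) := by
  refine continuous_pi fun j => continuous_finsetSum _ fun k _ => ?_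
  split_ifs
  · exact (hf.continuous_fderiv (by norm_num)).clm_apply continuous_const
  · exact continuous_const

theorem abs_le_lpnorm {d : ℕ} {e : ℝ} (he : 0 < e) (v : Fin d → ℝ) (j : Fin d) :
    |v j| ≤ lpnorm e v := by
  have h : |v j| ^ e ≤ ∑ j, |v j| ^ e :=
    Finset.single_le_sum (f := fun j => |v j| ^ e)
      (fun _ _ => Real.rpow_nonneg (abs_nonneg _) _) (Finset.mem_univ j)
  calc |v j| = (|v j| ^ e) ^ (1 / e) := by
        rw [← Real.rpow_mul (abs_nonneg _), mul_one_div_cancel he.ne', Real.rpow_one]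
    _ ≤ _ := Real.rpow_le_rpow (by positivity) h (by positivity)

theorem exists_modulus {E : Type*} [NormedAddCommGroup E] [NormedSpace ℝ E] [ProperSpace E]
    {Ψ : E × E → ℝ} (hΨ : Continuous Ψ) (h0 : ∀ x, Ψ (x, 0) = 0) {B p : ℝ} (hp : 0 < p)
    (hB : 0 ≤ B) (hb : ∀ x z, Ψ (x, z) ≤ B * (1 + ‖x‖ ^ p) + B * ‖z‖ ^ p) {ε R : ℝ} (hε : 0 < ε) :
    ∃ K, 0 ≤ K ∧ ∀ x z, Ψ (x, z) ≤
      ε + B * {x : E | R < ‖x‖}.indicator (fun x => 1 + ‖x‖ ^ p) x + K * ‖z‖ ^ p := by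
  obtain ⟨u, v, -, hv, hu, h0v, huv⟩ := generalized_tube_lemma
    (isCompact_closedBall (0 : E) R) (isCompact_singleton (x := (0 : E)))
    (isOpen_lt hΨ continuous_const : IsOpen {w | Ψ w < ε}) (by
      rintro ⟨x, z⟩ ⟨-, hz⟩
      have : z = 0 := hz
      simp [this, h0, hε])
  obtain ⟨η, hη, hηv⟩ := Metric.isOpen_iff.1 hv 0 (h0v rfl)
  have hK : 0 ≤ B * (1 + |R| ^ p) / η ^ p := by positivity
  refine ⟨B * (1 + |R| ^ p) / η ^ p + B, by positivity, fun x z => ?_⟩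
  have hz0 : 0 ≤ ‖z‖ ^ p := by positivity
  by_cases hx : R < ‖x‖
  · rw [indicator_of_mem (by exact hx)]
    nlinarith [hb x z, mul_nonneg hK hz0]
  · rw [indicator_of_notMem (by exact hx), mul_zero, add_zero]
    by_cases hz : ‖z‖ < η
    · have : Ψ (x, z) < ε := huv ⟨hu (by simpa using hx), hηv (by simpa using hz)⟩
      nlinarith [mul_nonneg hK hz0, mul_nonneg hB hz0]
    · push Not at hx hz
      have h1 : ‖x‖ ^ p ≤ |R| ^ p :=
        Real.rpow_le_rpow (norm_nonneg _) (hx.trans (le_abs_self R)) hp.le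
      have h2 : η ^ p ≤ ‖z‖ ^ p := Real.rpow_le_rpow hη.le hz hp.le
      have h3 : B * (1 + |R| ^ p) ≤ B * (1 + |R| ^ p) / η ^ p * ‖z‖ ^ p := by
        rw [div_mul_eq_mul_div, le_div_iff₀ (by positivity)]
        gcongr
      have h4 : B * (1 + ‖x‖ ^ p) ≤ B * (1 + |R| ^ p) := by gcongr
      nlinarith [hb x z]

theorem abs_Dn_rpow_le {N d : ℕ} {p q : ℝ} (hpq : p.HolderConjugate q) {f : PathD N d → ℝ} {C : ℝ}
    (hgrow : ∀ n : ℕ, ∀ x : PathD N d, lpnorm q (Dn f n x) ≤ C * (1 + ‖x‖ ^ (p - 1)))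
    (n : ℕ) (x : PathD N d) (j : Fin d) :
    |Dn f n x j| ^ q ≤ |C| ^ q * 2 ^ q * (1 + ‖x‖ ^ p) := by
  have h1 : |Dn f n x j| ≤ |C| * (1 + ‖x‖ ^ (p - 1)) :=
    (abs_le_lpnorm hpq.symm.pos _ _).trans
      ((hgrow n x).trans (mul_le_mul_of_nonneg_right (le_abs_self C) (by positivity)))
  calc |Dn f n x j| ^ q ≤ (|C| * (1 + ‖x‖ ^ (p - 1))) ^ q :=
        Real.rpow_le_rpow (abs_nonneg _) h1 hpq.symm.nonneg
    _ = |C| ^ q * (1 + ‖x‖ ^ (p - 1)) ^ q := Real.mul_rpow (abs_nonneg _) (by positivity)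
    _ ≤ |C| ^ q * (2 ^ q * (1 ^ q + (‖x‖ ^ (p - 1)) ^ q)) := by
        gcongr
        exact add_rpow_le_two_rpow_mul zero_le_one (by positivity) hpq.symm.nonneg
    _ = _ := by
        rw [Real.one_rpow, ← Real.rpow_mul (norm_nonneg _), hpq.sub_one_mul_conj]; ring

theorem exists_Dn_modulus {N d : ℕ} {p q : ℝ} (hpq : p.HolderConjugate q) {f : PathD N d → ℝ}
    (hf : ContDiff ℝ 1 f) {C : ℝ}
    (hgrow : ∀ n : ℕ, ∀ x : PathD N d, lpnorm q (Dn f n x) ≤ C * (1 + ‖x‖ ^ (p - 1))) :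
    ∃ B, 0 ≤ B ∧ ∀ ε R, 0 < ε → ∃ K, 0 ≤ K ∧ ∀ x z : PathD N d,
      ∑ s : Fin N × Fin d, |Dn f (s.1 + 1) (x + z) s.2 - Dn f (s.1 + 1) x s.2| ^ q ≤
        ε + B * {x : PathD N d | R < ‖x‖}.indicator (fun x => 1 + ‖x‖ ^ p) x + K * ‖z‖ ^ p := by
  set M : ℝ := |C| ^ q * 2 ^ q with hM
  have hM0 : 0 ≤ M := by positivity
  set c : ℝ := (Fintype.card (Fin N × Fin d) : ℝ) with hc
  have hc0 : 0 ≤ c := Nat.cast_nonneg _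
  refine ⟨c * (2 ^ q * (M * (2 ^ p + 2))), by positivity, fun ε R hε => ?_⟩
  refine exists_modulus (Ψ := fun w : PathD N d × PathD N d => ∑ s : Fin N × Fin d,
    |Dn f (s.1 + 1) (w.1 + w.2) s.2 - Dn f (s.1 + 1) w.1 s.2| ^ q) ?_ ?_ hpq.pos (by positivity)
    ?_ hε
  · refine continuous_finsetSum _ fun s _ => Continuous.rpow_const ?_ fun _ =>
      Or.inr hpq.symm.nonneg
    have h := (continuous_apply s.2).comp (continuous_Dn hf (s.1 + 1))
    exact ((h.comp (continuous_fst.add continuous_snd)).sub (h.comp continuous_fst)).abs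
  · intro x; simp [Real.zero_rpow hpq.symm.ne_zero]
  · intro x z
    have h1 : ∀ s : Fin N × Fin d,
        |Dn f (s.1 + 1) (x + z) s.2 - Dn f (s.1 + 1) x s.2| ^ q
          ≤ 2 ^ q * (M * (2 ^ p + 2)) * (1 + ‖x‖ ^ p + ‖z‖ ^ p) := by
      intro s
      have a1 := abs_Dn_rpow_le hpq hgrow (s.1 + 1) (x + z) s.2
      have a2 := abs_Dn_rpow_le hpq hgrow (s.1 + 1) x s.2
      have a3 : ‖x + z‖ ^ p ≤ 2 ^ p * (‖x‖ ^ p + ‖z‖ ^ p) :=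
        (Real.rpow_le_rpow (norm_nonneg _) (norm_add_le x z) hpq.nonneg).trans
          (add_rpow_le_two_rpow_mul (norm_nonneg _) (norm_nonneg _) hpq.nonneg)
      have hx : 0 ≤ ‖x‖ ^ p := by positivity
      have hz : 0 ≤ ‖z‖ ^ p := by positivity
      have h2p : (0 : ℝ) ≤ 2 ^ p := by positivity
      calc |Dn f (s.1 + 1) (x + z) s.2 - Dn f (s.1 + 1) x s.2| ^ q
          ≤ (|Dn f (s.1 + 1) (x + z) s.2| + |Dn f (s.1 + 1) x s.2|) ^ q :=
            Real.rpow_le_rpow (abs_nonneg _) (abs_sub _ _) hpq.symm.nonneg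
        _ ≤ 2 ^ q * (|Dn f (s.1 + 1) (x + z) s.2| ^ q + |Dn f (s.1 + 1) x s.2| ^ q) :=
            add_rpow_le_two_rpow_mul (abs_nonneg _) (abs_nonneg _) hpq.symm.nonneg
        _ ≤ 2 ^ q * (M * (1 + ‖x + z‖ ^ p) + M * (1 + ‖x‖ ^ p)) := by gcongr
        _ ≤ 2 ^ q * (M * (1 + 2 ^ p * (‖x‖ ^ p + ‖z‖ ^ p)) + M * (1 + ‖x‖ ^ p)) := by gcongr
        _ = 2 ^ q * (M * (2 + (2 ^ p + 1) * ‖x‖ ^ p + 2 ^ p * ‖z‖ ^ p)) := by ring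
        _ ≤ 2 ^ q * (M * ((2 ^ p + 2) * (1 + ‖x‖ ^ p + ‖z‖ ^ p))) := by
            gcongr; nlinarith
        _ = _ := by ring
    refine (Finset.sum_le_sum fun s _ => h1 s).trans (le_of_eq ?_)
    simp only [Finset.sum_const, Finset.card_univ, nsmul_eq_mul, ← hc]
    ring

/-- Pointwise first order expansion with a remainder controlled by Hölder's inequality. -/
theorem abs_sub_sub_le_of_modulus {N d : ℕ} {p q : ℝ} (hpq : p.HolderConjugate q)
    {f : PathD N d → ℝ} (hf : ContDiff ℝ 1 f) {x z : PathD N d} {Φ : ℝ}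
    (hΦ : ∀ w : PathD N d, ‖w‖ ≤ ‖z‖ →
      ∑ s : Fin N × Fin d, |Dn f (s.1 + 1) (x + w) s.2 - Dn f (s.1 + 1) x s.2| ^ q ≤ Φ) :
    |f (x + z) - f x - ∑ s : Fin N × Fin d, Dn f (s.1 + 1) x s.2 * inc s z|
      ≤ Φ ^ (1 / q) * (∑ s, |inc s z| ^ p) ^ (1 / p) := by
  have hd : ∀ t : ℝ, HasDerivAt (fun t : ℝ => f (x + t • z)) (fderiv ℝ f (x + t • z) z) t := by
    intro t
    have h1 : HasDerivAt (fun t : ℝ => x + t • z) z t := by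
      simpa using ((hasDerivAt_id t).smul_const z).const_add x
    exact ((hf.differentiable (by norm_num)) (x + t • z)).hasFDerivAt.comp_hasDerivAt t h1
  obtain ⟨t, ht, hft⟩ := exists_hasDerivAt_eq_slope (fun t : ℝ => f (x + t • z)) _ zero_lt_one
    (fun t _ => (hd t).continuousAt.continuousWithinAt) (fun t _ => hd t)
  simp only [one_smul, zero_smul, add_zero, sub_zero, div_one] at hft
  rw [← hft, fderiv_eq_sum_Dn_mul_inc, ← Finset.sum_sub_distrib]
  simp_rw [← sub_mul]
  refine (Finset.abs_sum_le_sum_abs _ _).trans ?_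
  simp_rw [abs_mul]
  refine (Real.inner_le_Lp_mul_Lq _ _ _ hpq.symm).trans ?_
  simp_rw [abs_abs]
  have := hpq.symm.nonneg
  gcongr
  refine hΦ _ ?_
  rw [norm_smul, Real.norm_eq_abs, abs_of_pos ht.1]
  exact mul_le_of_le_one_left (norm_nonneg _) ht.2.le

theorem integral_rpow_mul_rpow_le {Ω : Type*} {mΩ : MeasurableSpace Ω} {μ : Measure Ω}
    {p q : ℝ} (hpq : p.HolderConjugate q) {F G : Ω → ℝ} (hF : Integrable F μ)
    (hG : Integrable G μ) (hF0 : ∀ x, 0 ≤ F x) (hG0 : ∀ x, 0 ≤ G x) :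
    Integrable (fun x => F x ^ (1 / q) * G x ^ (1 / p)) μ ∧
      ∫ x, F x ^ (1 / q) * G x ^ (1 / p) ∂μ
        ≤ (∫ x, F x ∂μ) ^ (1 / q) * (∫ x, G x ∂μ) ^ (1 / p) := by
  have key : ∀ {e : ℝ} {H : Ω → ℝ}, 0 < e → Integrable H μ → (∀ x, 0 ≤ H x) →
      (∀ x, (H x ^ (1 / e)) ^ e = H x) ∧ MemLp (fun x => H x ^ (1 / e)) (ENNReal.ofReal e) μ := by
    intro e H he hH hH0
    have h1 : ∀ x, (H x ^ (1 / e)) ^ e = H x := fun x => by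
      rw [← Real.rpow_mul (hH0 x), one_div_mul_cancel he.ne', Real.rpow_one]
    refine ⟨h1, (memLp_ofReal_iff he ?_).2 ?_⟩
    · exact (Real.continuous_rpow_const (by positivity)).comp_aestronglyMeasurable hH.1
    · refine hH.congr (ae_of_all _ fun x => ?_)
      simp only
      rw [abs_of_nonneg (Real.rpow_nonneg (hH0 x) _), h1]
  obtain ⟨eF, mF⟩ := key hpq.symm.pos hF hF0
  obtain ⟨eG, mG⟩ := key hpq.pos hG hG0
  refine ⟨integrable_mul_of_memLp hpq.symm mF mG, ?_⟩
  have := integral_mul_le_Lp_mul_Lq_of_nonneg hpq.symm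
    (ae_of_all μ fun x => Real.rpow_nonneg (hF0 x) (1 / q))
    (ae_of_all μ fun x => Real.rpow_nonneg (hG0 x) (1 / p)) mF mG
  simpa only [eF, eG] using this

theorem integrable_one_add_norm_rpow {N d : ℕ} {p : ℝ} {μ : Measure (PathD N d)}
    [IsProbabilityMeasure μ] (hmom : Integrable (fun x : PathD N d => ‖x‖ ^ p) μ) :
    Integrable (fun x : PathD N d => 1 + ‖x‖ ^ p) μ :=
  (integrable_const 1).add hmom

theorem memLp_Dn {N d : ℕ} {p q : ℝ} (hpq : p.HolderConjugate q) {μ : Measure (PathD N d)}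
    [IsProbabilityMeasure μ] (hmom : Integrable (fun x : PathD N d => ‖x‖ ^ p) μ)
    {f : PathD N d → ℝ} (hf : ContDiff ℝ 1 f) {C : ℝ}
    (hgrow : ∀ n : ℕ, ∀ x : PathD N d, lpnorm q (Dn f n x) ≤ C * (1 + ‖x‖ ^ (p - 1)))
    (n : ℕ) (j : Fin d) : MemLp (fun x => Dn f n x j) (ENNReal.ofReal q) μ := by
  have hc : Continuous (fun x => Dn f n x j) := (continuous_apply j).comp (continuous_Dn hf n)
  rw [memLp_ofReal_iff hpq.symm.pos hc.aestronglyMeasurable]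
  refine ((integrable_one_add_norm_rpow hmom).const_mul (|C| ^ q * 2 ^ q)).mono'
    (hc.abs.rpow_const fun _ => Or.inr hpq.symm.nonneg).aestronglyMeasurable
    (ae_of_all _ fun x => ?_)
  rw [Real.norm_eq_abs, abs_of_nonneg (by positivity)]
  exact abs_Dn_rpow_le hpq hgrow n x j

theorem memLp_inc {N d : ℕ} {p : ℝ} (hp : 0 < p) {μ : Measure (PathD N d)}
    (hmom : Integrable (fun x : PathD N d => ‖x‖ ^ p) μ) (s : Fin N × Fin d) :
    MemLp (inc s) (ENNReal.ofReal p) μ := by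
  rw [memLp_ofReal_iff hp (continuous_inc s).aestronglyMeasurable]
  refine (hmom.const_mul (2 ^ p)).mono'
    ((continuous_inc s).abs.rpow_const fun _ => Or.inr hp.le).aestronglyMeasurable
    (ae_of_all _ fun x => ?_)
  rw [Real.norm_eq_abs, abs_of_nonneg (by positivity),
    ← Real.mul_rpow (by norm_num) (norm_nonneg _)]
  exact Real.rpow_le_rpow (abs_nonneg _) (abs_inc_le s x) hp.le

theorem memLp_inc_sub {N d : ℕ} {p : ℝ} (hp : 0 < p) {π : Measure (PathD N d × PathD N d)}
    (hcost : Integrable (fun z => cN p z.1 z.2) π) (s : Fin N × Fin d) :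
    MemLp (fun z : PathD N d × PathD N d => inc s (z.2 - z.1)) (ENNReal.ofReal p) π := by
  have hc : Continuous (fun z : PathD N d × PathD N d => inc s (z.2 - z.1)) :=
    (continuous_inc s).comp (continuous_snd.sub continuous_fst)
  rw [memLp_ofReal_iff hp hc.aestronglyMeasurable]
  refine hcost.mono' (hc.abs.rpow_const fun _ => Or.inr hp.le).aestronglyMeasurable
    (ae_of_all _ fun z => ?_)
  rw [Real.norm_eq_abs, abs_of_nonneg (by positivity), cN_eq_sum hp.ne']
  exact Finset.single_le_sum (f := fun s => |inc s (z.2 - z.1)| ^ p)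
    (fun _ _ => by positivity) (Finset.mem_univ s)

theorem costD_eq_sum {N d : ℕ} {p : ℝ} (hp : 0 < p) {π : Measure (PathD N d × PathD N d)}
    (hcost : Integrable (fun z => cN p z.1 z.2) π) :
    costD p π = ∑ s : Fin N × Fin d, ∫ z, |inc s (z.2 - z.1)| ^ p ∂π := by
  rw [costD, ← integral_finsetSum _ fun s _ => (memLp_inc_sub hp hcost s).integrable_abs_rpow hp]
  simp_rw [cN_eq_sum hp.ne']

theorem costD_nonneg {N d : ℕ} {p : ℝ} (hp : p ≠ 0) (π : Measure (PathD N d × PathD N d)) :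
    0 ≤ costD p π :=
  integral_nonneg fun z => by
    rw [cN_eq_sum hp]; exact Finset.sum_nonneg fun s _ => by positivity

theorem integrable_of_Dn_growth {N d : ℕ} {p q : ℝ} (hpq : p.HolderConjugate q)
    {μ : Measure (PathD N d)} [IsProbabilityMeasure μ]
    (hmom : Integrable (fun x : PathD N d => ‖x‖ ^ p) μ)
    {f : PathD N d → ℝ} (hf : ContDiff ℝ 1 f) {C : ℝ}
    (hgrow : ∀ n : ℕ, ∀ x : PathD N d, lpnorm q (Dn f n x) ≤ C * (1 + ‖x‖ ^ (p - 1))) :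
    Integrable f μ := by
  obtain ⟨B, hB, hmod⟩ := exists_Dn_modulus hpq hf hgrow
  obtain ⟨K, hK, hmod⟩ := hmod 1 0 one_pos
  have hpt : ∀ x : PathD N d, |f x - f 0 - ∑ s : Fin N × Fin d, Dn f (s.1 + 1) 0 s.2 * inc s x|
      ≤ (1 + K * ‖x‖ ^ p) ^ (1 / q) * (∑ s, |inc s x| ^ p) ^ (1 / p) := by
    intro x
    have := abs_sub_sub_le_of_modulus hpq hf (x := 0) (z := x) (Φ := 1 + K * ‖x‖ ^ p)
      (fun w hw => by
        have h1 := hmod 0 w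
        rw [indicator_of_notMem (by simp), mul_zero, add_zero] at h1
        have h2 : ‖w‖ ^ p ≤ ‖x‖ ^ p := Real.rpow_le_rpow (norm_nonneg _) hw hpq.nonneg
        nlinarith)
    simpa using this
  have hinc := fun s => memLp_inc (N := N) (d := d) hpq.pos hmom s
  obtain ⟨hi, -⟩ := integral_rpow_mul_rpow_le (μ := μ) hpq
    ((integrable_const (1 : ℝ)).add (hmom.const_mul K))
    (integrable_finsetSum Finset.univ fun s _ => (hinc s).integrable_abs_rpow hpq.pos)
    (fun x => by simp only [Pi.add_apply]; positivity)
    (fun x => Finset.sum_nonneg fun s _ => by positivity)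
  have hlin : Integrable (fun x : PathD N d =>
      f 0 + ∑ s : Fin N × Fin d, Dn f (s.1 + 1) 0 s.2 * inc s x) μ :=
    (integrable_const _).add (integrable_finsetSum _ fun s _ =>
      ((hinc s).integrable_of_one_le hpq.lt.le).const_mul _)
  have hrem : Integrable (fun x : PathD N d =>
      f x - f 0 - ∑ s : Fin N × Fin d, Dn f (s.1 + 1) 0 s.2 * inc s x) μ :=
    hi.mono' ((hf.continuous.sub continuous_const).sub (continuous_finsetSum _ fun s _ =>
      continuous_const.mul (continuous_inc s))).aestronglyMeasurable (ae_of_all _ hpt)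
  refine (hrem.add hlin).congr (ae_of_all _ fun x => ?_)
  simp only [Pi.add_apply]; ring

theorem exists_integral_indicator_le {E : Type*} [NormedAddCommGroup E] [MeasurableSpace E]
    [BorelSpace E] {μ : Measure E} {F : E → ℝ} (hF : Integrable F μ) {ε : ℝ} (hε : 0 < ε) :
    ∃ R : ℝ, ∫ x, {x : E | R < ‖x‖}.indicator F x ∂μ ≤ ε := by
  have h : Tendsto (fun n : ℕ => ∫ x, {x : E | (n : ℝ) < ‖x‖}.indicator F x ∂μ) atTop
      (nhds (∫ _, (0 : ℝ) ∂μ)) := by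
    refine tendsto_integral_of_dominated_convergence (fun x => ‖F x‖) (fun n => ?_) hF.norm
      (fun n => ae_of_all _ fun x => norm_indicator_le_norm_self _ _) (ae_of_all _ fun x => ?_)
    · exact hF.1.indicator (measurableSet_lt measurable_const measurable_norm)
    · refine tendsto_const_nhds.congr' ?_
      obtain ⟨m, hm⟩ := exists_nat_ge ‖x‖
      filter_upwards [eventually_ge_atTop m] with n hn
      have : (m : ℝ) ≤ n := by exact_mod_cast hn
      rw [indicator_of_notMem]
      simp only [mem_ofPred_eq, not_lt]; linarith
  rw [integral_zero] at h
  obtain ⟨n, hn⟩ := (h.eventually (gt_mem_nhds hε)).exists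
  exact ⟨n, hn.le⟩

/-- First order expansion of `π ↦ E_π[f(Y)]`, uniform over couplings with first marginal `μ`. -/
theorem exists_expansion_bound {N d : ℕ} {p q : ℝ} (hpq : p.HolderConjugate q)
    {μ : Measure (PathD N d)} [IsProbabilityMeasure μ]
    (hmom : Integrable (fun x : PathD N d => ‖x‖ ^ p) μ)
    {f : PathD N d → ℝ} (hf : ContDiff ℝ 1 f) {C : ℝ}
    (hgrow : ∀ n : ℕ, ∀ x : PathD N d, lpnorm q (Dn f n x) ≤ C * (1 + ‖x‖ ^ (p - 1)))
    {ε : ℝ} (hε : 0 < ε) :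
    ∃ K, 0 ≤ K ∧ ∀ (π : Measure (PathD N d × PathD N d)) [IsProbabilityMeasure π],
      π.map Prod.fst = μ → Integrable (fun z => cN p z.1 z.2) π →
      |∫ z, f z.2 ∂π - ∫ x, f x ∂μ
        - ∑ s : Fin N × Fin d, ∫ z, Dn f (s.1 + 1) z.1 s.2 * inc s (z.2 - z.1) ∂π|
      ≤ (ε + K * costD p π) ^ (1 / q) * (costD p π) ^ (1 / p) := by
  obtain ⟨B, hB, hmod⟩ := exists_Dn_modulus hpq hf hgrow
  obtain ⟨R, hR⟩ := exists_integral_indicator_le (integrable_one_add_norm_rpow hmom)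
    (show 0 < ε / (2 * (B + 1)) by positivity)
  obtain ⟨K, hK, hmod⟩ := hmod (ε / 2) R (by positivity)
  set A : ℝ := (Fintype.card (Fin N × Fin d) : ℝ) ^ (p - 1) with hA
  have hA0 : 0 ≤ A := by positivity
  refine ⟨K * A, by positivity, fun π _ hπ hcost => ?_⟩
  have hmp : MeasurePreserving (Prod.fst : PathD N d × PathD N d → _) π μ := ⟨measurable_fst, hπ⟩
  set J : PathD N d → ℝ := {x : PathD N d | R < ‖x‖}.indicator (fun x => 1 + ‖x‖ ^ p) with hJ
  have hJ0 : ∀ x, 0 ≤ J x := fun x => indicator_nonneg (fun x _ => by positivity) x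
  have hJi : Integrable J μ := (integrable_one_add_norm_rpow hmom).indicator
    (measurableSet_lt measurable_const measurable_norm)
  have hc0 : ∀ z : PathD N d × PathD N d, 0 ≤ cN p z.1 z.2 := fun z => by
    rw [cN_eq_sum hpq.ne_zero]; exact Finset.sum_nonneg fun s _ => by positivity
  have hJπ : Integrable (fun z : PathD N d × PathD N d => J z.1) π :=
    hmp.integrable_comp_of_integrable hJi
  have hΦi : Integrable (fun z : PathD N d × PathD N d =>
      ε / 2 + B * J z.1 + K * A * cN p z.1 z.2) π :=
    ((integrable_const _).add (hJπ.const_mul B)).add (hcost.const_mul _)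
  have hΦint : ∫ z, (ε / 2 + B * J z.1 + K * A * cN p z.1 z.2) ∂π ≤ ε + K * A * costD p π := by
    have e1 : Integrable (fun z : PathD N d × PathD N d => ε / 2 + B * J z.1) π :=
      (integrable_const _).add (hJπ.const_mul B)
    rw [integral_add e1 (hcost.const_mul _), integral_add (integrable_const _) (hJπ.const_mul B),
      integral_const_mul, integral_const_mul, integral_const, probReal_univ, one_smul, costD]
    have e2 : ∫ z, J z.1 ∂π = ∫ x, J x ∂μ := by
      rw [← hπ, integral_map measurable_fst.aemeasurable]
      rw [hπ]; exact hJi.1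
    have e3 : B * (ε / (2 * (B + 1))) ≤ ε / 2 := by
      rw [mul_div_assoc', div_le_div_iff₀ (by positivity) (by positivity)]
      nlinarith
    have e4 := mul_le_mul_of_nonneg_left hR hB
    rw [e2]
    linarith
  obtain ⟨hi, hle⟩ := integral_rpow_mul_rpow_le hpq hΦi hcost
    (fun z => by have := hJ0 z.1; have := hc0 z; positivity) hc0
  have hpt : ∀ z : PathD N d × PathD N d,
      |f z.2 - f z.1 - ∑ s : Fin N × Fin d, Dn f (s.1 + 1) z.1 s.2 * inc s (z.2 - z.1)|
      ≤ (ε / 2 + B * J z.1 + K * A * cN p z.1 z.2) ^ (1 / q) * (cN p z.1 z.2) ^ (1 / p) := by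
    intro z
    have := abs_sub_sub_le_of_modulus hpq hf (x := z.1) (z := z.2 - z.1)
      (Φ := ε / 2 + B * J z.1 + K * A * cN p z.1 z.2) (fun w hw => by
        have h1 := hmod z.1 w
        have h2 : ‖w‖ ^ p ≤ ‖z.2 - z.1‖ ^ p := Real.rpow_le_rpow (norm_nonneg _) hw hpq.nonneg
        have h3 := norm_rpow_le_sum hpq.lt.le (z.2 - z.1)
        rw [← cN_eq_sum hpq.ne_zero, ← hA] at h3
        have h4 := mul_le_mul_of_nonneg_left (h2.trans h3) hK
        linarith)
    rwa [add_sub_cancel, ← cN_eq_sum hpq.ne_zero] at this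
  have hfX : Integrable (fun z : PathD N d × PathD N d => f z.1) π :=
    hmp.integrable_comp_of_integrable (integrable_of_Dn_growth hpq hmom hf hgrow)
  have hDi : ∀ s : Fin N × Fin d, Integrable (fun z : PathD N d × PathD N d =>
      Dn f (s.1 + 1) z.1 s.2 * inc s (z.2 - z.1)) π := fun s =>
    integrable_mul_of_memLp hpq.symm
      ((memLp_Dn hpq hmom hf hgrow (s.1 + 1) s.2).comp_measurePreserving hmp)
      (memLp_inc_sub hpq.pos hcost s)
  have hsum := integrable_finsetSum Finset.univ fun s _ => hDi s
  have hcont : Continuous (fun z : PathD N d × PathD N d =>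
      f z.2 - f z.1 - ∑ s : Fin N × Fin d, Dn f (s.1 + 1) z.1 s.2 * inc s (z.2 - z.1)) :=
    ((hf.continuous.comp continuous_snd).sub (hf.continuous.comp continuous_fst)).sub
      (continuous_finsetSum _ fun s _ =>
        (((continuous_apply s.2).comp (continuous_Dn hf (s.1 + 1))).comp continuous_fst).mul
          ((continuous_inc s).comp (continuous_snd.sub continuous_fst)))
  have hrem : Integrable (fun z : PathD N d × PathD N d =>
      f z.2 - f z.1 - ∑ s : Fin N × Fin d, Dn f (s.1 + 1) z.1 s.2 * inc s (z.2 - z.1)) π :=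
    hi.mono' hcont.aestronglyMeasurable (ae_of_all _ hpt)
  have hfY : Integrable (fun z : PathD N d × PathD N d => f z.2) π := by
    refine ((hrem.add hfX).add hsum).congr (ae_of_all _ fun z => ?_)
    simp only [Pi.add_apply]; ring
  have hfμ : ∫ x, f x ∂μ = ∫ z, f z.1 ∂π := by
    rw [← hπ, integral_map measurable_fst.aemeasurable hf.continuous.aestronglyMeasurable]
  have hfYX : Integrable (fun z : PathD N d × PathD N d => f z.2 - f z.1) π := hfY.sub hfX
  rw [hfμ, ← integral_sub hfY hfX, ← integral_finsetSum _ fun s _ => hDi s,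
    ← integral_sub hfYX hsum]
  refine (abs_integral_le_integral_abs).trans ((integral_mono hrem.abs hi hpt).trans
    (hle.trans ?_))
  have := costD_nonneg hpq.ne_zero π
  have hc : 0 ≤ (costD p π) ^ (1 / p) := by positivity
  refine mul_le_mul_of_nonneg_right (Real.rpow_le_rpow (integral_nonneg fun z => ?_) hΦint
    (by have := hpq.symm.pos; positivity)) hc
  have := hJ0 z.1; have := hc0 z
  simp only [Pi.zero_apply]
  positivity

/-- The `s.2`-th component at time `s.1 + 1` of the optional projection of the pathwise Malliavin
derivative. -/
def optProj {N d : ℕ} (μ : Measure (PathD N d)) (f : PathD N d → ℝ) (s : Fin N × Fin d)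
    (x : PathD N d) : ℝ :=
  (μ[Dn f (s.1 + 1) | Fn N d (s.1 + 1)]) x s.2

theorem measurable_optProj {N d : ℕ} (μ : Measure (PathD N d)) (f : PathD N d → ℝ)
    (s : Fin N × Fin d) : Measurable[Fn N d (s.1 + 1)] (optProj μ f s) :=
  (measurable_pi_apply s.2).comp stronglyMeasurable_condExp.measurable

theorem setIntegral_optProj {N d : ℕ} {μ : Measure (PathD N d)} [IsProbabilityMeasure μ]
    {f : PathD N d → ℝ} {s : Fin N × Fin d} (hD : Integrable (Dn f (s.1 + 1)) μ)
    {S : Set (PathD N d)} (hS : MeasurableSet[Fn N d (s.1 + 1)] S) :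
    ∫ x in S, (Dn f (s.1 + 1) x s.2 - optProj μ f s x) ∂μ = 0 := by
  have hi : Integrable (μ[Dn f (s.1 + 1) | Fn N d (s.1 + 1)]) μ := integrable_condExp
  have h := congrFun (setIntegral_condExp (Fn_le N d (s.1 + 1)) hD hS) s.2
  rw [integral_apply hi.integrableOn, integral_apply hD.integrableOn] at h
  simp only [optProj]
  rw [integral_sub (hD.eval s.2).integrableOn (hi.eval s.2).integrableOn, h, sub_self]

theorem memLp_optProj {N d : ℕ} {q : ℝ} (hq : 1 ≤ q) {μ : Measure (PathD N d)}
    [IsProbabilityMeasure μ] {f : PathD N d → ℝ} {s : Fin N × Fin d}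
    (hD : Integrable (Dn f (s.1 + 1)) μ)
    (hDq : MemLp (fun x => Dn f (s.1 + 1) x s.2) (ENNReal.ofReal q) μ) :
    MemLp (optProj μ f s) (ENNReal.ofReal q) μ := by
  have hi : Integrable (optProj μ f s) μ :=
    (integrable_condExp (f := Dn f (s.1 + 1)) (m := Fn N d (s.1 + 1))).eval s.2
  have h : optProj μ f s =ᵐ[μ] μ[fun x => Dn f (s.1 + 1) x s.2 | Fn N d (s.1 + 1)] := by
    refine ae_eq_condExp_of_forall_setIntegral_eq (Fn_le N d _) (hD.eval s.2)
      (fun _ _ _ => hi.integrableOn) (fun S hS _ => ?_)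
      (measurable_optProj μ f s).stronglyMeasurable.aestronglyMeasurable
    have := setIntegral_optProj hD hS
    rw [integral_sub (hD.eval s.2).integrableOn hi.integrableOn] at this
    linarith
  have := hDq.condExp (m := Fn N d (s.1 + 1)) (by simpa using ENNReal.ofReal_le_ofReal hq)
  exact this.ae_eq h.symm

theorem setIntegral_comp_eq {Ω Ω' : Type*} {mΩ : MeasurableSpace Ω} {mΩ' : MeasurableSpace Ω'}
    {π : Measure Ω} {μ : Measure Ω'} {T : Ω → Ω'} (hT : Measurable T) (hπ : π.map T = μ)
    {F : Ω' → ℝ} (hF : Measurable F) {S : Set Ω'} (hS : MeasurableSet S) :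
    ∫ z in T ⁻¹' S, F (T z) ∂π = ∫ x in S, F x ∂μ := by
  rw [← hπ, setIntegral_map hS hF.aestronglyMeasurable hT.aemeasurable]

/-- Against a bicausal coupling with a martingale second marginal, the derivative may be replaced
by its optional projection corrected by a predictable process. -/
theorem integral_Dn_mul_inc_eq {N d : ℕ} {p q : ℝ} (hpq : p.HolderConjugate q)
    {μ : Measure (PathD N d)} [IsProbabilityMeasure μ] (hmart : IsMartingaleMeasure μ)
    (hmom : Integrable (fun x : PathD N d => ‖x‖ ^ p) μ)
    {f : PathD N d → ℝ} (hf : ContDiff ℝ 1 f) {C : ℝ}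
    (hgrow : ∀ n : ℕ, ∀ x : PathD N d, lpnorm q (Dn f n x) ≤ C * (1 + ‖x‖ ^ (p - 1)))
    {π : Measure (PathD N d × PathD N d)} [IsProbabilityMeasure π]
    (hbc : IsBicausalCoupling μ (π.map Prod.snd) π) (hν : IsMartingaleMeasure (π.map Prod.snd))
    (hcost : Integrable (fun z => cN p z.1 z.2) π) (s : Fin N × Fin d) {η : PathD N d → ℝ}
    (hηm : Measurable[Fn N d s.1] η) (hη : MemLp η (ENNReal.ofReal q) μ) :
    ∫ z, Dn f (s.1 + 1) z.1 s.2 * inc s (z.2 - z.1) ∂π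
      = ∫ z, (optProj μ f s z.1 - η z.1) * inc s (z.2 - z.1) ∂π := by
  obtain ⟨⟨-, hπ, hc1⟩, hc2⟩ := hbc
  have : IsProbabilityMeasure (π.map Prod.snd) :=
    Measure.isProbabilityMeasure_map measurable_snd.aemeasurable
  have hmp : MeasurePreserving (Prod.fst : PathD N d × PathD N d → _) π μ := ⟨measurable_fst, hπ⟩
  have hmp2 : MeasurePreserving (Prod.snd : PathD N d × PathD N d → _) π (π.map Prod.snd) :=
    ⟨measurable_snd, rfl⟩
  have hfst : ∀ n, (Fn N d n).comap Prod.fst ≤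
      (inferInstance : MeasurableSpace (PathD N d × PathD N d)) := fun n =>
    (MeasurableSpace.comap_mono (Fn_le N d n)).trans measurable_fst.comap_le
  have hsnd : ∀ n, (Fn N d n).comap Prod.snd ≤
      (inferInstance : MeasurableSpace (PathD N d × PathD N d)) := fun n =>
    (MeasurableSpace.comap_mono (Fn_le N d n)).trans measurable_snd.comap_le
  have hDq := fun j => memLp_Dn hpq hmom hf hgrow (s.1 + 1) j
  have hD : Integrable (Dn f (s.1 + 1)) μ :=
    Integrable.of_eval fun j => (hDq j).integrable_of_one_le hpq.symm.lt.le
  have hg := memLp_optProj hpq.symm.lt.le hD (hDq s.2)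
  have hgm := (measurable_optProj μ f s).mono (Fn_le N d _) le_rfl
  have hηm' := hηm.mono (Fn_le N d _) le_rfl
  have hDm : Measurable (fun x => Dn f (s.1 + 1) x s.2) :=
    ((continuous_apply s.2).comp (continuous_Dn hf (s.1 + 1))).measurable
  set a : PathD N d → ℝ := fun x => Dn f (s.1 + 1) x s.2 - optProj μ f s x with ha
  have ham : Measurable a := hDm.sub hgm
  have haq : MemLp a (ENNReal.ofReal q) μ := (hDq s.2).sub hg
  have hai : Integrable a μ := haq.integrable_of_one_le hpq.symm.lt.le
  have hincX : MemLp (fun z : PathD N d × PathD N d => inc s z.1) (ENNReal.ofReal p) π :=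
    (memLp_inc hpq.pos hmom s).comp_measurePreserving hmp
  have hincY : MemLp (fun z : PathD N d × PathD N d => inc s z.2) (ENNReal.ofReal p) π := by
    refine (hincX.add (memLp_inc_sub hpq.pos hcost s)).ae_eq (ae_of_all _ fun z => ?_)
    simp [inc_sub]
  have haX := haq.comp_measurePreserving hmp
  have hηX := hη.comp_measurePreserving hmp
  have i1 := integrable_mul_of_memLp hpq.symm haX hincX
  have i2 := integrable_mul_of_memLp hpq.symm haX hincY
  have i3 := integrable_mul_of_memLp hpq hincX hηX
  have i4 := integrable_mul_of_memLp hpq hincY hηX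
  simp only [Function.comp_apply] at i1 i2 i3 i4
  have e1 : ∫ z, a z.1 * inc s z.1 ∂π = 0 := by
    refine integral_mul_eq_zero_of_setIntegral_eq_zero (hfst (s.1 + 1))
      (hmp.integrable_comp_of_integrable hai) ?_
      ((measurable_Fn_inc s).comp (comap_measurable Prod.fst)) i1
    rintro _ ⟨S, hS, rfl⟩
    exact (setIntegral_comp_eq measurable_fst hπ ham (Fn_le _ _ _ _ hS)).trans
      (setIntegral_optProj hD hS)
  have e2 : ∫ z, a z.1 * inc s z.2 ∂π = 0 := by
    refine (hc1 (s.1 + 1)).integral_mul_eq_zero (hfst _) (hsnd _) (hfst _)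
      (hmp.integrable_comp_of_integrable hai) ?_ ?_
      ((measurable_Fn_inc s).comp (comap_measurable Prod.snd)) i2
    · rw [Fn_self]; exact ham.comp (comap_measurable Prod.fst)
    rintro _ ⟨S, hS, rfl⟩
    exact (setIntegral_comp_eq measurable_fst hπ ham (Fn_le _ _ _ _ hS)).trans
      (setIntegral_optProj hD hS)
  have e3 : ∫ z, inc s z.1 * η z.1 ∂π = 0 := by
    refine integral_mul_eq_zero_of_setIntegral_eq_zero (hfst s.1)
      (hmp.integrable_comp_of_integrable (hmart.integrable_inc s)) ?_
      (hηm.comp (comap_measurable Prod.fst)) i3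
    rintro _ ⟨S, hS, rfl⟩
    exact (setIntegral_comp_eq measurable_fst hπ (continuous_inc s).measurable
      (Fn_le _ _ _ _ hS)).trans (hmart.setIntegral_inc s hS)
  have e4 : ∫ z, inc s z.2 * η z.1 ∂π = 0 := by
    refine (hc2 s.1).integral_mul_eq_zero (hsnd _) (hfst _) (hsnd _)
      (hmp2.integrable_comp_of_integrable (hν.integrable_inc s)) ?_ ?_
      (hηm.comp (comap_measurable Prod.fst)) i4
    · rw [Fn_self]; exact (continuous_inc s).measurable.comp (comap_measurable Prod.snd)
    rintro _ ⟨S, hS, rfl⟩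
    exact (setIntegral_comp_eq measurable_snd rfl (continuous_inc s).measurable
      (Fn_le _ _ _ _ hS)).trans (hν.setIntegral_inc s hS)
  have i5 : Integrable (fun z : PathD N d × PathD N d =>
      (optProj μ f s z.1 - η z.1) * inc s (z.2 - z.1)) π :=
    integrable_mul_of_memLp hpq.symm ((hg.sub hη).comp_measurePreserving hmp)
      (memLp_inc_sub hpq.pos hcost s)
  have i6 : Integrable (fun z : PathD N d × PathD N d =>
      a z.1 * inc s z.2 - a z.1 * inc s z.1) π := i2.sub i1
  have i7 : Integrable (fun z : PathD N d × PathD N d =>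
      inc s z.2 * η z.1 - inc s z.1 * η z.1) π := i4.sub i3
  have i8 : Integrable (fun z : PathD N d × PathD N d =>
      (a z.1 * inc s z.2 - a z.1 * inc s z.1) + (inc s z.2 * η z.1 - inc s z.1 * η z.1)) π :=
    i6.add i7
  have e5 : ∀ z : PathD N d × PathD N d, Dn f (s.1 + 1) z.1 s.2 * inc s (z.2 - z.1)
      = (optProj μ f s z.1 - η z.1) * inc s (z.2 - z.1)
        + ((a z.1 * inc s z.2 - a z.1 * inc s z.1) + (inc s z.2 * η z.1 - inc s z.1 * η z.1)) := by
    intro z; simp only [ha, inc_sub]; ring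
  simp_rw [e5]
  rw [integral_add i5 i8, integral_add i6 i7, integral_sub i2 i1, integral_sub i4 i3, e1, e2, e3,
    e4]
  simp

theorem sum_integral_Dn_mul_inc_le {N d : ℕ} {p q : ℝ} (hpq : p.HolderConjugate q)
    {μ : Measure (PathD N d)} [IsProbabilityMeasure μ] (hmart : IsMartingaleMeasure μ)
    (hmom : Integrable (fun x : PathD N d => ‖x‖ ^ p) μ)
    {f : PathD N d → ℝ} (hf : ContDiff ℝ 1 f) {C : ℝ}
    (hgrow : ∀ n : ℕ, ∀ x : PathD N d, lpnorm q (Dn f n x) ≤ C * (1 + ‖x‖ ^ (p - 1)))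
    {π : Measure (PathD N d × PathD N d)} [IsProbabilityMeasure π]
    (hbc : IsBicausalCoupling μ (π.map Prod.snd) π) (hν : IsMartingaleMeasure (π.map Prod.snd))
    (hcost : Integrable (fun z => cN p z.1 z.2) π) {η : Fin N × Fin d → PathD N d → ℝ}
    (hηm : ∀ s, Measurable[Fn N d s.1] (η s)) (hη : ∀ s, MemLp (η s) (ENNReal.ofReal q) μ) :
    ∑ s : Fin N × Fin d, ∫ z, Dn f (s.1 + 1) z.1 s.2 * inc s (z.2 - z.1) ∂π
      ≤ (∑ s, ∫ x, |optProj μ f s x - η s x| ^ q ∂μ) ^ (1 / q) * (costD p π) ^ (1 / p) := by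
  have hmp : MeasurePreserving (Prod.fst : PathD N d × PathD N d → _) π μ :=
    ⟨measurable_fst, hbc.1.2.1⟩
  have hg : ∀ s : Fin N × Fin d, MemLp (optProj μ f s) (ENNReal.ofReal q) μ := fun s =>
    memLp_optProj hpq.symm.lt.le
      (Integrable.of_eval fun j =>
        (memLp_Dn hpq hmom hf hgrow (s.1 + 1) j).integrable_of_one_le hpq.symm.lt.le)
      (memLp_Dn hpq hmom hf hgrow (s.1 + 1) s.2)
  have hm : ∀ s, Measurable (fun x => |optProj μ f s x - η s x| ^ q) := fun s =>
    (Real.continuous_rpow_const hpq.symm.nonneg).measurable.comp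
      ((((measurable_optProj μ f s).mono (Fn_le N d _) le_rfl).sub
        ((hηm s).mono (Fn_le N d _) le_rfl)).abs)
  have e : ∀ s, ∫ x, |optProj μ f s x - η s x| ^ q ∂μ
      = ∫ z, |optProj μ f s z.1 - η s z.1| ^ q ∂π := fun s => by
    rw [← hbc.1.2.1, integral_map measurable_fst.aemeasurable]
    rw [hbc.1.2.1]
    exact (hm s).aestronglyMeasurable
  simp_rw [e]
  rw [costD_eq_sum hpq.pos hcost]
  refine le_trans (Finset.sum_le_sum fun s _ => ?_) (sum_integral_abs_mul_le hpq.symm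
    (a := fun s (z : PathD N d × PathD N d) => optProj μ f s z.1 - η s z.1)
    (fun s => ((hg s).sub (hη s)).comp_measurePreserving hmp)
    (fun s => memLp_inc_sub hpq.pos hcost s))
  rw [integral_Dn_mul_inc_eq hpq hmart hmom hf hgrow hbc hν hcost s (hηm s) (hη s)]
  exact (le_abs_self _).trans abs_integral_le_integral_abs

/-- The distance in `L^q(μ)` between the optional projection of the pathwise Malliavin derivative
and the predictable processes. -/
def predDist {N d : ℕ} (q : ℝ) (μ : Measure (PathD N d)) (f : PathD N d → ℝ) : ℝ :=
  ⨅ h : {h : ℕ → PathD N d → Fin d → ℝ // IsPredictable h ∧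
      ∀ n : ℕ, 1 ≤ n → n ≤ N → Integrable (fun x => lpnorm q (h n x) ^ q) μ},
    (∑ n ∈ Finset.Icc 1 N,
      ∫ x, lpnorm q ((μ[Dn f n | Fn N d n]) x - h.1 n x) ^ q ∂μ) ^ (1 / q)

theorem lpnorm_nonneg {d : ℕ} (e : ℝ) (v : Fin d → ℝ) : 0 ≤ lpnorm e v :=
  Real.rpow_nonneg (Finset.sum_nonneg fun _ _ => Real.rpow_nonneg (abs_nonneg _) _) _

theorem predDist_objective_nonneg {N d : ℕ} (q : ℝ) (μ : Measure (PathD N d))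
    (f : PathD N d → ℝ) (h : ℕ → PathD N d → Fin d → ℝ) :
    0 ≤ (∑ n ∈ Finset.Icc 1 N,
      ∫ x, lpnorm q ((μ[Dn f n | Fn N d n]) x - h n x) ^ q ∂μ) ^ (1 / q) :=
  Real.rpow_nonneg (Finset.sum_nonneg fun _ _ => integral_nonneg fun _ =>
    Real.rpow_nonneg (lpnorm_nonneg _ _) _) _

theorem predDist_nonneg {N d : ℕ} (q : ℝ) (μ : Measure (PathD N d)) (f : PathD N d → ℝ) :
    0 ≤ predDist q μ f :=
  Real.iInf_nonneg fun h => predDist_objective_nonneg q μ f h.1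

theorem predDist_objective_eq {N d : ℕ} {q : ℝ} (hq : 0 < q) {μ : Measure (PathD N d)}
    [IsProbabilityMeasure μ] {f : PathD N d → ℝ}
    (hg : ∀ s, MemLp (optProj μ f s) (ENNReal.ofReal q) μ) {h : ℕ → PathD N d → Fin d → ℝ}
    (hh : ∀ s : Fin N × Fin d, MemLp (fun x => h (s.1 + 1) x s.2) (ENNReal.ofReal q) μ) :
    ∑ n ∈ Finset.Icc 1 N, ∫ x, lpnorm q ((μ[Dn f n | Fn N d n]) x - h n x) ^ q ∂μ
      = ∑ s : Fin N × Fin d, ∫ x, |optProj μ f s x - h (s.1 + 1) x s.2| ^ q ∂μ := by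
  rw [sum_Icc_eq_sum_fin, Fintype.sum_prod_type]
  refine Finset.sum_congr rfl fun i _ => ?_
  simp_rw [lpnorm_rpow hq.ne']
  rw [integral_finsetSum _ fun j _ => ?_]
  · rfl
  · exact ((hg (i, j)).sub (hh (i, j))).integrable_abs_rpow hq

theorem memLp_of_integrable_lpnorm {d : ℕ} {Ω : Type*} [MeasurableSpace Ω] {q : ℝ} (hq : 0 < q)
    {μ : Measure Ω} {v : Ω → Fin d → ℝ} (hv : Measurable v)
    (hi : Integrable (fun x => lpnorm q (v x) ^ q) μ) (j : Fin d) :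
    MemLp (fun x => v x j) (ENNReal.ofReal q) μ := by
  have hm : Measurable fun x => v x j := (measurable_pi_apply j).comp hv
  rw [memLp_ofReal_iff hq hm.aestronglyMeasurable]
  refine hi.mono' ((Real.continuous_rpow_const hq.le).measurable.comp hm.abs).aestronglyMeasurable
    (ae_of_all _ fun x => ?_)
  rw [Real.norm_of_nonneg (Real.rpow_nonneg (abs_nonneg _) _)]
  exact Real.rpow_le_rpow (abs_nonneg _) (abs_le_lpnorm hq _ j) hq.le

instance nonempty_predictable {N d : ℕ} (q : ℝ) (μ : Measure (PathD N d))
    [IsProbabilityMeasure μ] : Nonempty {h : ℕ → PathD N d → Fin d → ℝ // IsPredictable h ∧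
      ∀ n : ℕ, 1 ≤ n → n ≤ N → Integrable (fun x => lpnorm q (h n x) ^ q) μ} :=
  ⟨⟨fun _ _ => 0, fun _ _ _ => measurable_const, fun _ _ _ => integrable_const _⟩⟩

theorem predDist_le {N d : ℕ} {q : ℝ} (hq : 0 < q) {μ : Measure (PathD N d)}
    [IsProbabilityMeasure μ] {f : PathD N d → ℝ}
    (hg : ∀ s, MemLp (optProj μ f s) (ENNReal.ofReal q) μ) {η : Fin N × Fin d → PathD N d → ℝ}
    (hηm : ∀ s, Measurable[Fn N d s.1] (η s)) (hη : ∀ s, MemLp (η s) (ENNReal.ofReal q) μ) :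
    predDist q μ f ≤ (∑ s, ∫ x, |optProj μ f s x - η s x| ^ q ∂μ) ^ (1 / q) := by
  let h : ℕ → PathD N d → Fin d → ℝ := fun n x j =>
    if hn : 1 ≤ n ∧ n ≤ N then η (⟨n - 1, by omega⟩, j) x else 0
  have hs : ∀ s : Fin N × Fin d, (fun x => h (s.1 + 1) x s.2) = η s := fun s => by
    funext x
    simp [h, Nat.succ_le_iff]
  have hh : ∀ s : Fin N × Fin d, MemLp (fun x => h (s.1 + 1) x s.2) (ENNReal.ofReal q) μ :=
    fun s => by rw [hs]; exact hη s
  have hpred : IsPredictable h := fun n h1 h2 => by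
    refine @measurable_pi_lambda _ _ _ (Fn N d (n - 1)) _ _ fun j => ?_
    have : (fun x => h n x j) = η (⟨n - 1, by omega⟩, j) := by
      funext x
      simp [h, h1, h2]
    rw [this]
    exact hηm (⟨n - 1, by omega⟩, j)
  have hint : ∀ n : ℕ, 1 ≤ n → n ≤ N → Integrable (fun x => lpnorm q (h n x) ^ q) μ := by
    intro n h1 h2
    simp_rw [lpnorm_rpow hq.ne']
    refine integrable_finsetSum _ fun j _ => ?_
    have := (hh (⟨n - 1, by omega⟩, j)).integrable_abs_rpow hq
    simpa [Nat.sub_add_cancel h1] using this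
  refine (ciInf_le ⟨0, ?_⟩ ⟨h, hpred, hint⟩).trans_eq ?_
  · rintro _ ⟨h, rfl⟩
    exact predDist_objective_nonneg q μ f h.1
  · rw [predDist_objective_eq hq hg hh]
    simp_rw [← hs]

theorem sum_integral_Dn_mul_inc_le_predDist {N d : ℕ} {p q : ℝ} (hpq : p.HolderConjugate q)
    {μ : Measure (PathD N d)} [IsProbabilityMeasure μ] (hmart : IsMartingaleMeasure μ)
    (hmom : Integrable (fun x : PathD N d => ‖x‖ ^ p) μ)
    {f : PathD N d → ℝ} (hf : ContDiff ℝ 1 f) {C : ℝ}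
    (hgrow : ∀ n : ℕ, ∀ x : PathD N d, lpnorm q (Dn f n x) ≤ C * (1 + ‖x‖ ^ (p - 1)))
    {π : Measure (PathD N d × PathD N d)} [IsProbabilityMeasure π]
    (hbc : IsBicausalCoupling μ (π.map Prod.snd) π) (hν : IsMartingaleMeasure (π.map Prod.snd))
    (hcost : Integrable (fun z => cN p z.1 z.2) π) :
    ∑ s : Fin N × Fin d, ∫ z, Dn f (s.1 + 1) z.1 s.2 * inc s (z.2 - z.1) ∂π
      ≤ predDist q μ f * (costD p π) ^ (1 / p) := by
  have hq := hpq.symm.pos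
  have hg : ∀ s : Fin N × Fin d, MemLp (optProj μ f s) (ENNReal.ofReal q) μ := fun s =>
    memLp_optProj hpq.symm.lt.le
      (Integrable.of_eval fun j =>
        (memLp_Dn hpq hmom hf hgrow (s.1 + 1) j).integrable_of_one_le hpq.symm.lt.le)
      (memLp_Dn hpq hmom hf hgrow (s.1 + 1) s.2)
  rw [predDist, Real.iInf_mul_of_nonneg (Real.rpow_nonneg (costD_nonneg hpq.ne_zero π) _)]
  refine le_ciInf fun h => ?_
  have hm : ∀ s : Fin N × Fin d, Measurable[Fn N d s.1] fun x => h.1 (s.1 + 1) x s.2 := fun s =>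
    (measurable_pi_apply s.2).comp (h.2.1 (s.1 + 1) (by omega) (by omega))
  have hh : ∀ s : Fin N × Fin d, MemLp (fun x => h.1 (s.1 + 1) x s.2) (ENNReal.ofReal q) μ :=
    fun s => memLp_of_integrable_lpnorm hq
      ((h.2.1 (s.1 + 1) (by omega) (by omega)).mono (Fn_le N d _) le_rfl)
      (h.2.2 (s.1 + 1) (by omega) (by omega)) s.2
  rw [predDist_objective_eq hq hg hh]
  exact sum_integral_Dn_mul_inc_le hpq hmart hmom hf hgrow hbc hν hcost hm hh

/-- The distance to the predictable processes is attained in duality by a martingale difference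
process of unit norm. -/
theorem exists_extremal {N d : ℕ} {p q : ℝ} (hpq : p.HolderConjugate q)
    {μ : Measure (PathD N d)} [IsProbabilityMeasure μ] {f : PathD N d → ℝ}
    (hg : ∀ s, MemLp (optProj μ f s) (ENNReal.ofReal q) μ) :
    ∃ φ : Fin N × Fin d → PathD N d → ℝ, (∀ s, Measurable[Fn N d (s.1 + 1)] (φ s)) ∧
      (∀ s, MemLp (φ s) (ENNReal.ofReal p) μ) ∧
      (∀ s S, MeasurableSet[Fn N d s.1] S → ∫ x in S, φ s x ∂μ = 0) ∧
      ∑ s, ∫ x, |φ s x| ^ p ∂μ ≤ 1 ∧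
      predDist q μ f ≤ ∑ s, ∫ x, optProj μ f s x * φ s x ∂μ := by
  have hq := hpq.symm.pos
  have hr : 0 < q - 1 := hpq.symm.sub_one_pos
  have hgm : ∀ s : Fin N × Fin d, Measurable (optProj μ f s) := fun s =>
    (measurable_optProj μ f s).mono (Fn_le N d _) le_rfl
  have hrq : q - 1 + 1 = q := by ring
  choose H hHm hHL hH0 using fun s : Fin N × Fin d =>
    exists_condProj (measurable_trunc (N := N) (d := d) s.1) (hgm s) hr (by rw [hrq]; exact hg s)
  rw [hrq] at hHL
  set a : Fin N × Fin d → PathD N d → ℝ := fun s x => optProj μ f s x - H s (trunc s.1 x) with ha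
  have hηm : ∀ s : Fin N × Fin d, Measurable[Fn N d s.1] fun x => H s (trunc s.1 x) := fun s =>
    (hHm s).comp (comap_measurable _)
  have haL : ∀ s, MemLp (a s) (ENNReal.ofReal q) μ := fun s => (hg s).sub (hHL s)
  have ham : ∀ s, Measurable[Fn N d (s.1 + 1)] (a s) := fun s =>
    (measurable_optProj μ f s).sub ((hηm s).mono (Fn_mono N d (Nat.le_succ _)) le_rfl)
  set b : Fin N × Fin d → PathD N d → ℝ := fun s x => signedPow (q - 1) (a s x) with hb
  have hbm : ∀ s, Measurable[Fn N d (s.1 + 1)] (b s) := fun s =>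
    (continuous_signedPow hr).measurable.comp (ham s)
  have hbp : ∀ s x, |b s x| ^ p = |a s x| ^ q := fun s x => by
    rw [hb, abs_signedPow hr, ← Real.rpow_mul (abs_nonneg _), hpq.symm.sub_one_mul_conj]
  have hbL : ∀ s, MemLp (b s) (ENNReal.ofReal p) μ := fun s => by
    rw [memLp_ofReal_iff hpq.pos
      ((hbm s).mono (Fn_le N d _) le_rfl).aestronglyMeasurable]
    simp_rw [hbp]
    exact (haL s).integrable_abs_rpow hq
  have hb0 : ∀ s S, MeasurableSet[Fn N d s.1] S → ∫ x in S, b s x ∂μ = 0 := by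
    rintro s _ ⟨S, hS, rfl⟩
    exact hH0 s S hS
  have hab : ∀ s, ∫ x, optProj μ f s x * b s x ∂μ = ∫ x, |a s x| ^ q ∂μ := fun s => by
    have e : ∀ x, optProj μ f s x * b s x = |a s x| ^ q + b s x * H s (trunc s.1 x) := fun x => by
      have := mul_signedPow hr (a s x)
      rw [hrq] at this
      rw [← this]
      simp only [ha, hb]
      ring
    have i : Integrable (fun x => b s x * H s (trunc s.1 x)) μ :=
      integrable_mul_of_memLp hpq (hbL s) (hHL s)
    simp_rw [e]
    rw [integral_add ((haL s).integrable_abs_rpow hq) i,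
      integral_mul_eq_zero_of_setIntegral_eq_zero (Fn_le N d s.1)
        ((hbL s).integrable_of_one_le hpq.lt.le) (hb0 s) (hηm s) i, add_zero]
  set A : ℝ := ∑ s, ∫ x, |a s x| ^ q ∂μ with hA
  have hle : predDist q μ f ≤ A ^ (1 / q) := predDist_le hq hg hηm hHL
  have hA0 : 0 ≤ A := Finset.sum_nonneg fun s _ => integral_nonneg fun x =>
    Real.rpow_nonneg (abs_nonneg _) _
  rcases hA0.eq_or_lt with h0 | hpos
  · refine ⟨fun _ _ => 0, fun _ => measurable_const, fun _ => MemLp.zero, fun _ _ _ => by simp,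
      by simp [Real.zero_rpow hpq.ne_zero], ?_⟩
    rw [← h0, Real.zero_rpow (one_div_ne_zero hq.ne')] at hle
    simpa using hle
  · refine ⟨fun s x => A ^ (-(1 / p)) * b s x, fun s => (hbm s).const_mul _,
      fun s => (hbL s).const_mul _, fun s S hS => ?_, ?_, ?_⟩
    · rw [integral_const_mul, hb0 s S hS, mul_zero]
    · have e : ∀ s x, |A ^ (-(1 / p)) * b s x| ^ p = A⁻¹ * |a s x| ^ q := fun s x => by
        rw [abs_mul, Real.mul_rpow (abs_nonneg _) (abs_nonneg _), hbp,
          abs_of_nonneg (Real.rpow_nonneg hA0 _), ← Real.rpow_mul hA0, neg_mul,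
          one_div_mul_cancel hpq.ne_zero, Real.rpow_neg_one]
      simp_rw [e, integral_const_mul]
      rw [← Finset.mul_sum, ← hA, inv_mul_cancel₀ hpos.ne']
    · have e : ∀ s x, optProj μ f s x * (A ^ (-(1 / p)) * b s x)
          = A ^ (-(1 / p)) * (optProj μ f s x * b s x) := fun s x => by ring
      simp_rw [e, integral_const_mul, hab]
      rw [← Finset.mul_sum, ← hA]
      refine hle.trans_eq ?_
      nth_rewrite 3 [← Real.rpow_one A]
      rw [← Real.rpow_add hpos]
      congr 1
      have := hpq.inv_add_inv_eq_one
      simp only [one_div]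
      linarith

theorem norm_trunc_succ_sub_le {N d : ℕ} (i : Fin N) {x y : PathD N d}
    (h : trunc i x = trunc i y) :
    ‖trunc (i + 1) x - trunc (i + 1) y‖ ≤ ‖x i - y i‖ := by
  refine (pi_norm_le_iff_of_nonneg (norm_nonneg _)).2 fun k => ?_
  rcases lt_trichotomy (k : ℕ) i with hk | hk | hk
  · have := congrFun h k
    rw [trunc_apply_of_lt x hk, trunc_apply_of_lt y hk] at this
    rw [Pi.sub_apply, trunc_apply_of_lt x (hk.trans (Nat.lt_succ_self _)),
      trunc_apply_of_lt y (hk.trans (Nat.lt_succ_self _)), this, sub_self, norm_zero]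
    exact norm_nonneg _
  · obtain rfl : k = i := Fin.ext hk
    rw [Pi.sub_apply, trunc_apply_of_lt x (Nat.lt_succ_self _),
      trunc_apply_of_lt y (Nat.lt_succ_self _)]
  · simp [trunc, show ¬ k + 1 ≤ (i : ℕ) + 1 by omega]

/-- Martingale increments are approximated in `L^p` by martingale increments which are Lipschitz in
the last coordinate. -/
theorem exists_lipschitz_martingale_increment {N d : ℕ} {p : ℝ} (hp : 1 ≤ p)
    {μ : Measure (PathD N d)} [IsProbabilityMeasure μ] (i : Fin N) {φ : PathD N d → ℝ}
    (hφm : Measurable[Fn N d (i + 1)] φ) (hφ : MemLp φ (ENNReal.ofReal p) μ)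
    (hφ0 : ∀ S, MeasurableSet[Fn N d i] S → ∫ x in S, φ x ∂μ = 0) {ε : ℝ} (hε : 0 < ε) :
    ∃ ψ : PathD N d → ℝ, Measurable[Fn N d (i + 1)] ψ ∧ MemLp ψ (ENNReal.ofReal p) μ ∧
      (∀ S, MeasurableSet[Fn N d i] S → ∫ x in S, ψ x ∂μ = 0) ∧
      (∃ K : ℝ, 0 ≤ K ∧ ∀ x y, trunc i x = trunc i y → |ψ x - ψ y| ≤ K * ‖x i - y i‖) ∧
      eLpNorm (φ - ψ) (ENNReal.ofReal p) μ ≤ ENNReal.ofReal ε := by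
  have hp' : 1 ≤ ENNReal.ofReal p := by simpa using ENNReal.ofReal_le_ofReal hp
  have hT := measurable_trunc (N := N) (d := d) (i + 1)
  have hφ' := hφm.mono (Fn_le N d _) le_rfl
  have : IsProbabilityMeasure (μ.map (trunc (i + 1))) :=
    Measure.isProbabilityMeasure_map hT.aemeasurable
  have hφT : φ ∘ trunc (i + 1) = φ := funext fun x => apply_trunc_of_measurable hφm x
  have hφν : MemLp φ (ENNReal.ofReal p) (μ.map (trunc (i + 1))) := by
    rw [memLp_map_measure_iff hφ'.aestronglyMeasurable hT.aemeasurable, hφT]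
    exact hφ
  obtain ⟨g, hgc, hgs, hge⟩ := hφν.exist_eLpNorm_sub_le ENNReal.ofReal_ne_top hp' (half_pos hε)
  obtain ⟨K, hK⟩ := ContDiff.lipschitzWith_of_hasCompactSupport hgc hgs (by simp)
  have hgm := hgs.continuous.measurable
  set G : PathD N d → ℝ := g ∘ trunc (i + 1) with hG
  have hGe : eLpNorm (φ - G) (ENNReal.ofReal p) μ ≤ ENNReal.ofReal (ε / 2) := by
    rw [eLpNorm_map_measure (hφ'.sub hgm).aestronglyMeasurable hT.aemeasurable] at hge
    rwa [hG, ← hφT]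
  have hGm : Measurable[Fn N d (i + 1)] G := hgm.comp (comap_measurable _)
  have hd : MemLp (φ - G) (ENNReal.ofReal p) μ :=
    ⟨(hφ'.sub (hgm.comp hT)).aestronglyMeasurable, hGe.trans_lt ENNReal.ofReal_lt_top⟩
  have hGL : MemLp G (ENNReal.ofReal p) μ := by
    have := hφ.sub hd
    rwa [sub_sub_cancel] at this
  have hGi := hGL.integrable_of_one_le hp
  have hφi := hφ.integrable_of_one_le hp
  have hcm : Measurable[Fn N d i] (μ[G | Fn N d i]) := stronglyMeasurable_condExp.measurable
  refine ⟨G - μ[G | Fn N d i], hGm.sub (hcm.mono (Fn_mono N d (Nat.le_succ _)) le_rfl),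
    hGL.sub (hGL.condExp hp'), fun S hS => ?_, ⟨K, K.2, fun x y h => ?_⟩, ?_⟩
  · simp only [Pi.sub_apply]
    rw [integral_sub hGi.integrableOn integrable_condExp.integrableOn,
      setIntegral_condExp (Fn_le N d i) hGi hS, sub_self]
  · simp only [Pi.sub_apply]
    rw [← apply_trunc_of_measurable hcm x, ← apply_trunc_of_measurable hcm y, h,
      sub_sub_sub_cancel_right, ← Real.dist_eq]
    refine (hK.dist_le_mul _ _).trans ?_
    rw [dist_eq_norm]
    exact mul_le_mul_of_nonneg_left (norm_trunc_succ_sub_le i h) K.2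
  · have h0 : μ[φ | Fn N d i] =ᵐ[μ] 0 :=
      (ae_eq_condExp_of_forall_setIntegral_eq (Fn_le N d i) hφi
        (fun _ _ _ => (integrable_zero _ _ _).integrableOn)
        (fun S hS _ => by simp [hφ0 S hS]) aestronglyMeasurable_zero).symm
    have h1 : φ - (G - μ[G | Fn N d i]) =ᵐ[μ] (φ - G) - μ[φ - G | Fn N d i] := by
      filter_upwards [h0, condExp_sub hφi hGi (Fn N d i)] with x hx hx'
      simp only [Pi.sub_apply, Pi.zero_apply] at hx hx' ⊢
      rw [hx', hx]
      ring
    rw [eLpNorm_congr_ae h1]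
    refine (eLpNorm_sub_le hd.1 (hd.condExp hp').1 hp').trans ?_
    refine (add_le_add hGe ((eLpNorm_condExp_le_eLpNorm _ hp').trans hGe)).trans_eq ?_
    rw [← ENNReal.ofReal_add (half_pos hε).le (half_pos hε).le, add_halves]

/-- Martingale increments `φ (i, j)` at time `i + 1` which are `K`-Lipschitz in the last
coordinate. -/
structure LipschitzIncrements {N d : ℕ} (p : ℝ) (μ : Measure (PathD N d)) (K : ℝ)
    (φ : Fin N × Fin d → PathD N d → ℝ) : Prop where
  measurable : ∀ s, Measurable[Fn N d (s.1 + 1)] (φ s)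
  memLp : ∀ s, MemLp (φ s) (ENNReal.ofReal p) μ
  setIntegral_eq_zero : ∀ s S, MeasurableSet[Fn N d s.1] S → ∫ x in S, φ s x ∂μ = 0
  lipschitz : ∀ s x y, trunc s.1 x = trunc s.1 y → |φ s x - φ s y| ≤ K * ‖x s.1 - y s.1‖

theorem toReal_eLpNorm_rpow {Ω : Type*} [MeasurableSpace Ω] {μ : Measure Ω} {r : ℝ} (hr : 0 < r)
    {a : Ω → ℝ} (ha : MemLp a (ENNReal.ofReal r) μ) :
    (eLpNorm a (ENNReal.ofReal r) μ).toReal ^ r = ∫ x, |a x| ^ r ∂μ := by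
  have h0 : 0 ≤ ∫ x, |a x| ^ r ∂μ := integral_nonneg fun _ => Real.rpow_nonneg (abs_nonneg _) _
  rw [ha.eLpNorm_eq_integral_rpow_norm (by simpa using hr) ENNReal.ofReal_ne_top,
    ENNReal.toReal_ofReal hr.le]
  simp_rw [Real.norm_eq_abs]
  rw [ENNReal.toReal_ofReal (Real.rpow_nonneg h0 _), ← Real.rpow_mul h0,
    inv_mul_cancel₀ hr.ne', Real.rpow_one]

theorem exists_lipschitzIncrements {N d : ℕ} {p q : ℝ} (hpq : p.HolderConjugate q)
    {μ : Measure (PathD N d)} [IsProbabilityMeasure μ] {f : PathD N d → ℝ}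
    (hg : ∀ s, MemLp (optProj μ f s) (ENNReal.ofReal q) μ) {κ : ℝ} (hκ : κ < predDist q μ f) :
    ∃ K φ, 0 ≤ K ∧ LipschitzIncrements p μ K φ ∧ ∑ s, ∫ x, |φ s x| ^ p ∂μ ≤ 1 ∧
      κ < ∑ s, ∫ x, optProj μ f s x * φ s x ∂μ := by
  have hp := hpq.pos
  have hp' : 1 ≤ ENNReal.ofReal p := by simpa using ENNReal.ofReal_le_ofReal hpq.lt.le
  obtain ⟨φ, hφm, hφL, hφ0, hφ1, hφI⟩ := exists_extremal hpq hg
  have hκφ := hκ.trans_le hφI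
  set J : ℝ := ∑ s, ∫ x, optProj μ f s x * φ s x ∂μ with hJ
  obtain ⟨θ, hθκ, hθ⟩ : ∃ θ : ℝ, κ * (1 + θ) < J ∧ 0 < θ := by
    have h : ∀ᶠ θ : ℝ in nhdsWithin 0 (Ioi 0), κ * (1 + θ) < J := by
      refine Eventually.filter_mono nhdsWithin_le_nhds ?_
      have : ContinuousAt (fun θ : ℝ => κ * (1 + θ)) 0 := by fun_prop
      exact this.eventually_lt continuousAt_const (by simpa using hκφ)
    exact (h.and self_mem_nhdsWithin).exists
  set n : Fin N × Fin d → ℝ := fun s => (eLpNorm (φ s) (ENNReal.ofReal p) μ).toReal with hn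
  set G : ℝ := (∑ s, ∫ x, |optProj μ f s x| ^ q ∂μ) ^ (1 / q) with hG
  obtain ⟨ε, ⟨hε1, hε2⟩, hε⟩ : ∃ ε : ℝ, (∑ s, (n s + ε) ^ p < 1 + θ ∧
      κ * (1 + θ) < J - G * (∑ _s : Fin N × Fin d, ε ^ p) ^ (1 / p)) ∧ 0 < ε := by
    have h1 : ∀ᶠ ε : ℝ in nhdsWithin 0 (Ioi 0), ∑ s, (n s + ε) ^ p < 1 + θ := by
      refine Eventually.filter_mono nhdsWithin_le_nhds ?_
      have : Continuous (fun ε : ℝ => ∑ s, (n s + ε) ^ p) :=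
        continuous_finsetSum _ fun s _ =>
          (Real.continuous_rpow_const hp.le).comp (continuous_const.add continuous_id)
      refine this.continuousAt.eventually_lt continuousAt_const ?_
      simp only [add_zero, hn, toReal_eLpNorm_rpow hp (hφL _)]
      linarith
    have h2 : ∀ᶠ ε : ℝ in nhdsWithin 0 (Ioi 0),
        κ * (1 + θ) < J - G * (∑ _s : Fin N × Fin d, ε ^ p) ^ (1 / p) := by
      refine Eventually.filter_mono nhdsWithin_le_nhds ?_
      have : Continuous (fun ε : ℝ => J - G * (∑ _s : Fin N × Fin d, ε ^ p) ^ (1 / p)) :=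
        continuous_const.sub (continuous_const.mul ((Real.continuous_rpow_const
          (one_div_nonneg.2 hp.le)).comp (continuous_finsetSum _ fun s _ =>
            Real.continuous_rpow_const hp.le)))
      refine continuousAt_const.eventually_lt this.continuousAt ?_
      simpa [Real.zero_rpow hp.ne', Real.zero_rpow (inv_ne_zero hp.ne')] using hθκ
    exact ((h1.and h2).and self_mem_nhdsWithin).exists
  choose ψ hψm hψL hψ0 hψK hψε using fun s : Fin N × Fin d =>
    exists_lipschitz_martingale_increment hpq.lt.le s.1 (hφm s) (hφL s) (hφ0 s) hε
  choose K hK0 hK using hψK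
  have hψn : ∀ s, ∫ x, |ψ s x| ^ p ∂μ ≤ (n s + ε) ^ p := fun s => by
    rw [← toReal_eLpNorm_rpow hp (hψL s)]
    refine Real.rpow_le_rpow ENNReal.toReal_nonneg ?_ hp.le
    have h := eLpNorm_sub_le (hφL s).1 ((hφL s).sub (hψL s)).1 hp'
    rw [sub_sub_cancel] at h
    have h' := ENNReal.toReal_mono (ENNReal.add_ne_top.2 ⟨(hφL s).2.ne, ENNReal.ofReal_ne_top⟩)
      (h.trans (add_le_add le_rfl (hψε s)))
    rwa [ENNReal.toReal_add (hφL s).2.ne ENNReal.ofReal_ne_top, ENNReal.toReal_ofReal hε.le] at h'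
  have hdiff : ∀ s, ∫ x, |φ s x - ψ s x| ^ p ∂μ ≤ ε ^ p := fun s =>
    (toReal_eLpNorm_rpow hp ((hφL s).sub (hψL s))).symm.trans_le (Real.rpow_le_rpow
      ENNReal.toReal_nonneg (ENNReal.toReal_le_of_le_ofReal hε.le (hψε s)) hp.le)
  have hlin : J - ∑ s, ∫ x, optProj μ f s x * ψ s x ∂μ
      ≤ G * (∑ _s : Fin N × Fin d, ε ^ p) ^ (1 / p) := by
    rw [hJ, ← Finset.sum_sub_distrib]
    have h := sum_integral_abs_mul_le hpq.symm hg (fun s => (hφL s).sub (hψL s))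
    refine (Finset.sum_le_sum fun s _ => ?_).trans (h.trans (mul_le_mul_of_nonneg_left
      (Real.rpow_le_rpow (Finset.sum_nonneg fun s _ => integral_nonneg fun x =>
        Real.rpow_nonneg (abs_nonneg _) _) (Finset.sum_le_sum fun s _ => hdiff s)
        (one_div_nonneg.2 hp.le)) (Real.rpow_nonneg (Finset.sum_nonneg fun s _ =>
          integral_nonneg fun x => Real.rpow_nonneg (abs_nonneg _) _) _)))
    rw [← integral_sub (integrable_mul_of_memLp hpq.symm (hg s) (hφL s))
      (integrable_mul_of_memLp hpq.symm (hg s) (hψL s))]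
    simp_rw [← mul_sub]
    exact (le_abs_self _).trans abs_integral_le_integral_abs
  have hθ1 : 0 < 1 + θ := by linarith
  refine ⟨∑ s, (1 + θ)⁻¹ * K s, fun s x => (1 + θ)⁻¹ * ψ s x, Finset.sum_nonneg fun s _ =>
    mul_nonneg (inv_nonneg.2 hθ1.le) (hK0 s), ⟨fun s => (hψm s).const_mul _,
    fun s => (hψL s).const_mul _, fun s S hS => ?_, fun s x y h => ?_⟩, ?_, ?_⟩
  · rw [integral_const_mul, hψ0 s S hS, mul_zero]
  · rw [← mul_sub, abs_mul, abs_of_pos (inv_pos.2 hθ1)]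
    refine (mul_le_mul_of_nonneg_left (hK s x y h) (inv_nonneg.2 hθ1.le)).trans ?_
    rw [← mul_assoc]
    exact mul_le_mul_of_nonneg_right (Finset.single_le_sum (f := fun s => (1 + θ)⁻¹ * K s)
      (fun s _ => mul_nonneg (inv_nonneg.2 hθ1.le) (hK0 s)) (Finset.mem_univ s)) (norm_nonneg _)
  · simp_rw [abs_mul, Real.mul_rpow (abs_nonneg _) (abs_nonneg _), integral_const_mul]
    rw [← Finset.mul_sum, abs_of_pos (inv_pos.2 hθ1)]
    have h1 : ∑ s, ∫ x, |ψ s x| ^ p ∂μ ≤ 1 + θ :=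
      (Finset.sum_le_sum fun s _ => hψn s).trans hε1.le
    have h2 : ((1 + θ)⁻¹) ^ p ≤ (1 + θ)⁻¹ := by
      simpa using Real.rpow_le_rpow_of_exponent_ge (inv_pos.2 hθ1)
        (inv_le_one_of_one_le₀ (by linarith)) hpq.lt.le
    calc ((1 + θ)⁻¹) ^ p * ∑ s, ∫ x, |ψ s x| ^ p ∂μ ≤ (1 + θ)⁻¹ * (1 + θ) :=
          mul_le_mul h2 h1 (Finset.sum_nonneg fun s _ => integral_nonneg fun x =>
            Real.rpow_nonneg (abs_nonneg _) _) (inv_nonneg.2 hθ1.le)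
      _ = 1 := inv_mul_cancel₀ hθ1.ne'
  · have e : ∀ s x, optProj μ f s x * ((1 + θ)⁻¹ * ψ s x)
        = (1 + θ)⁻¹ * (optProj μ f s x * ψ s x) := fun s x => by ring
    simp_rw [e, integral_const_mul]
    rw [← Finset.mul_sum, ← div_eq_inv_mul, lt_div_iff₀ hθ1]
    linarith

/-- The path `x` with increments shifted by `t * φ`. -/
def shift {N d : ℕ} (t : ℝ) (φ : Fin N × Fin d → PathD N d → ℝ) (x : PathD N d) : PathD N d :=
  x + DeltaInv fun i j => t * φ (i, j) x

theorem inc_shift {N d : ℕ} (t : ℝ) (φ : Fin N × Fin d → PathD N d → ℝ) (s : Fin N × Fin d)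
    (x : PathD N d) : inc s (shift t φ x) = inc s x + t * φ s x := by
  rw [shift, inc_add, inc_DeltaInv]

theorem inc_shift_sub {N d : ℕ} (t : ℝ) (φ : Fin N × Fin d → PathD N d → ℝ) (s : Fin N × Fin d)
    (x : PathD N d) : inc s (shift t φ x - x) = t * φ s x := by
  rw [inc_sub, inc_shift, add_sub_cancel_left]

theorem apply_eq_of_trunc_eq {N d m n : ℕ} {F : PathD N d → ℝ} (hF : Measurable[Fn N d m] F)
    (hmn : m ≤ n) {x y : PathD N d} (h : trunc n x = trunc n y) : F x = F y := by
  have hF' := hF.mono (Fn_mono N d hmn) le_rfl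
  rw [← apply_trunc_of_measurable hF' x, h, apply_trunc_of_measurable hF' y]

theorem LipschitzIncrements.measurable_shift {N d : ℕ} {p K : ℝ} {μ : Measure (PathD N d)}
    {φ : Fin N × Fin d → PathD N d → ℝ} (hφ : LipschitzIncrements p μ K φ) (t : ℝ) :
    Measurable (shift t φ) := by
  refine measurable_id.add (measurable_pi_iff.2 fun i => measurable_pi_iff.2 fun j => ?_)
  simp only [DeltaInv, Finset.sum_apply]
  refine Finset.measurable_sum _ fun k _ => ?_
  split_ifs
  · exact ((hφ.measurable (k, j)).mono (Fn_le N d _) le_rfl).const_mul t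
  · exact measurable_const

theorem LipschitzIncrements.trunc_shift_eq {N d : ℕ} {p K : ℝ} {μ : Measure (PathD N d)}
    {φ : Fin N × Fin d → PathD N d → ℝ} (hφ : LipschitzIncrements p μ K φ) (t : ℝ) {n : ℕ}
    {x y : PathD N d} (h : trunc n x = trunc n y) :
    trunc n (shift t φ x) = trunc n (shift t φ y) := by
  funext i
  simp only [trunc]
  split_ifs with hi
  · have hxy := congrFun h i
    rw [trunc_apply_of_lt x hi, trunc_apply_of_lt y hi] at hxy
    simp only [shift, Pi.add_apply, hxy, DeltaInv]
    congr 1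
    refine Finset.sum_congr rfl fun k _ => ?_
    split_ifs with hk
    · funext j
      rw [apply_eq_of_trunc_eq (hφ.measurable (k, j)) (by simp only; omega) h]
    · rfl
  · rfl

theorem LipschitzIncrements.trunc_eq_of_trunc_shift_eq {N d : ℕ} {p K : ℝ}
    {μ : Measure (PathD N d)} {φ : Fin N × Fin d → PathD N d → ℝ}
    (hφ : LipschitzIncrements p μ K φ) (hK : 0 ≤ K) {t : ℝ} (ht : 0 ≤ t) (htK : t * K < 1) {n : ℕ}
    {x y : PathD N d} (h : trunc n (shift t φ x) = trunc n (shift t φ y)) :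
    trunc n x = trunc n y := by
  induction n with
  | zero => funext i; simp [trunc]
  | succ n ih =>
    have ih := ih (trunc_eq_of_le (Nat.le_succ n) h)
    funext k
    rcases lt_trichotomy (k : ℕ) n with hk | hk | hk
    · have := congrFun ih k
      rwa [trunc_apply_of_lt x hk, trunc_apply_of_lt y hk,
        ← trunc_apply_of_lt x (hk.trans (Nat.lt_succ_self n)),
        ← trunc_apply_of_lt y (hk.trans (Nat.lt_succ_self n))] at this
    · subst hk
      rw [trunc_apply_of_lt x (Nat.lt_succ_self _), trunc_apply_of_lt y (Nat.lt_succ_self _)]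
      have hj : ∀ j, x k j - y k j = -(t * (φ (k, j) x - φ (k, j) y)) := fun j => by
        have h1 := apply_eq_of_trunc_eq (measurable_Fn_inc (k, j)) le_rfl h
        have h2 : coord x (k : ℕ) = coord y (k : ℕ) := by
          rw [← coord_trunc le_rfl x, ih, coord_trunc le_rfl y]
        rw [inc_shift, inc_shift] at h1
        simp only [inc, coord_succ, h2] at h1
        linarith
      have hle : ‖x k - y k‖ ≤ t * K * ‖x k - y k‖ := by
        refine (pi_norm_le_iff_of_nonneg
          (mul_nonneg (mul_nonneg ht hK) (norm_nonneg _))).2 fun j => ?_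
        rw [Pi.sub_apply, hj, norm_neg, norm_mul, Real.norm_of_nonneg ht, mul_assoc]
        exact mul_le_mul_of_nonneg_left (hφ.lipschitz (k, j) x y ih) ht
      have : ‖x k - y k‖ ≤ 0 := by nlinarith [norm_nonneg (x k - y k)]
      exact sub_eq_zero.1 (norm_le_zero_iff.1 this)
    · simp [trunc, show ¬ (k : ℕ) + 1 ≤ n + 1 by omega]

theorem LipschitzIncrements.measurableSet_preimage_shift {N d : ℕ} {p K : ℝ}
    {μ : Measure (PathD N d)} {φ : Fin N × Fin d → PathD N d → ℝ}
    (hφ : LipschitzIncrements p μ K φ) (t : ℝ) {n : ℕ} {S : Set (PathD N d)}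
    (hS : MeasurableSet[Fn N d n] S) : MeasurableSet[Fn N d n] (shift t φ ⁻¹' S) := by
  obtain ⟨S, hS, rfl⟩ := hS
  have : Measurable[Fn N d n] fun x => trunc n (shift t φ x) :=
    measurable_Fn_iff (fun x => hφ.trunc_shift_eq t (trunc_trunc le_rfl x))
      ((measurable_trunc n).comp (hφ.measurable_shift t))
  exact this hS

/-- By the Lusin–Souslin theorem, the shifted path carries at every time the same information as
the original one. -/
theorem LipschitzIncrements.exists_preimage_shift_eq {N d : ℕ} {p K : ℝ}
    {μ : Measure (PathD N d)} {φ : Fin N × Fin d → PathD N d → ℝ}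
    (hφ : LipschitzIncrements p μ K φ) (hK : 0 ≤ K) {t : ℝ} (ht : 0 ≤ t) (htK : t * K < 1) {n : ℕ}
    {S : Set (PathD N d)} (hS : MeasurableSet[Fn N d n] S) :
    ∃ S', MeasurableSet[Fn N d n] S' ∧ shift t φ ⁻¹' S' = S := by
  obtain ⟨S, hS, rfl⟩ := hS
  change MeasurableSet S at hS
  have hR : MeasurableSet {x : PathD N d | trunc n x = x} :=
    measurableSet_eq_fun (measurable_trunc n) measurable_id
  have hF : Measurable fun x : PathD N d => trunc n (shift t φ x) :=
    (measurable_trunc n).comp (hφ.measurable_shift t)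
  have himg := (hS.inter hR).image_of_measurable_injOn hF fun x hx y hy h => by
    have := hφ.trunc_eq_of_trunc_shift_eq hK ht htK h
    rwa [hx.2, hy.2] at this
  refine ⟨trunc n ⁻¹' _, ⟨_, himg, rfl⟩, ?_⟩
  ext x
  constructor
  · rintro ⟨y, ⟨hyS, hyR⟩, hy⟩
    have := hφ.trunc_eq_of_trunc_shift_eq hK ht htK hy
    change trunc n x ∈ S
    rwa [← this, hyR]
  · intro hx
    exact ⟨trunc n x, ⟨hx, trunc_trunc le_rfl x⟩, hφ.trunc_shift_eq t (trunc_trunc le_rfl x)⟩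

/-- The coupling of `μ` with its image under the shift of increments. -/
def shiftCoupling {N d : ℕ} (μ : Measure (PathD N d)) (t : ℝ)
    (φ : Fin N × Fin d → PathD N d → ℝ) : Measure (PathD N d × PathD N d) :=
  μ.map fun x => (x, shift t φ x)

namespace LipschitzIncrements

variable {N d : ℕ} {p K : ℝ} {μ : Measure (PathD N d)}
  {φ : Fin N × Fin d → PathD N d → ℝ}

theorem measurable_prod_shift (hφ : LipschitzIncrements p μ K φ) (t : ℝ) :
    Measurable fun x => (x, shift t φ x) :=
  measurable_id.prodMk (hφ.measurable_shift t)

theorem map_fst_shiftCoupling (hφ : LipschitzIncrements p μ K φ) (t : ℝ) :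
    (shiftCoupling μ t φ).map Prod.fst = μ := by
  rw [shiftCoupling, Measure.map_map measurable_fst (hφ.measurable_prod_shift t)]
  exact Measure.map_id

theorem map_snd_shiftCoupling (hφ : LipschitzIncrements p μ K φ) (t : ℝ) :
    (shiftCoupling μ t φ).map Prod.snd = μ.map (shift t φ) := by
  rw [shiftCoupling, Measure.map_map measurable_snd (hφ.measurable_prod_shift t)]
  rfl

theorem ae_shiftCoupling (hφ : LipschitzIncrements p μ K φ) (t : ℝ) :
    ∀ᵐ z ∂shiftCoupling μ t φ, z.2 = shift t φ z.1 := by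
  have hm : MeasurableSet {z : PathD N d × PathD N d | z.2 = shift t φ z.1} :=
    measurableSet_eq_fun measurable_snd ((hφ.measurable_shift t).comp measurable_fst)
  rw [shiftCoupling, ae_map_iff (hφ.measurable_prod_shift t).aemeasurable hm]
  exact ae_of_all _ fun _ => rfl

theorem integrable_cN_shiftCoupling (hφ : LipschitzIncrements p μ K φ) (hp : 0 < p) (t : ℝ) :
    Integrable (fun z => cN p z.1 z.2) (shiftCoupling μ t φ) := by
  simp_rw [cN_eq_sum hp.ne']
  refine integrable_finsetSum _ fun s _ => ?_
  have hm : Measurable fun z : PathD N d × PathD N d => |inc s (z.2 - z.1)| ^ p :=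
    (Real.continuous_rpow_const hp.le).measurable.comp
      ((continuous_inc s).measurable.comp (measurable_snd.sub measurable_fst)).abs
  rw [shiftCoupling, integrable_map_measure hm.aestronglyMeasurable
    (hφ.measurable_prod_shift t).aemeasurable]
  simp only [Function.comp_def, inc_shift_sub]
  exact ((hφ.memLp s).const_mul t).integrable_abs_rpow hp

variable [IsProbabilityMeasure μ]

theorem isProbabilityMeasure_shiftCoupling (hφ : LipschitzIncrements p μ K φ) (t : ℝ) :
    IsProbabilityMeasure (shiftCoupling μ t φ) :=
  Measure.isProbabilityMeasure_map (hφ.measurable_prod_shift t).aemeasurable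

theorem isBicausalCoupling_shiftCoupling (hφ : LipschitzIncrements p μ K φ) (hK : 0 ≤ K) {t : ℝ}
    (ht : 0 ≤ t) (htK : t * K < 1) :
    IsBicausalCoupling μ ((shiftCoupling μ t φ).map Prod.snd) (shiftCoupling μ t φ) := by
  have := hφ.isProbabilityMeasure_shiftCoupling t
  have hfst : ∀ n, (Fn N d n).comap Prod.fst ≤
      (inferInstance : MeasurableSpace (PathD N d × PathD N d)) := fun n =>
    (MeasurableSpace.comap_mono (Fn_le N d n)).trans measurable_fst.comap_le
  have hsnd : ∀ n, (Fn N d n).comap Prod.snd ≤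
      (inferInstance : MeasurableSpace (PathD N d × PathD N d)) := fun n =>
    (MeasurableSpace.comap_mono (Fn_le N d n)).trans measurable_snd.comap_le
  refine ⟨⟨rfl, hφ.map_fst_shiftCoupling t, fun n => ?_⟩, fun n => ?_⟩
  · refine condIndepOn_of_ae_eq (hfst n) (hfst N) ?_
    rintro _ ⟨B, hB, rfl⟩
    refine ⟨_, ⟨_, hφ.measurableSet_preimage_shift t hB, rfl⟩, ?_⟩
    filter_upwards [hφ.ae_shiftCoupling t] with z hz
    change (z.2 ∈ B) = (shift t φ z.1 ∈ B)
    rw [hz]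
  · refine condIndepOn_of_ae_eq (hsnd n) (hsnd N) ?_
    rintro _ ⟨B, hB, rfl⟩
    obtain ⟨B', hB', rfl⟩ := hφ.exists_preimage_shift_eq hK ht htK hB
    refine ⟨_, ⟨_, hB', rfl⟩, ?_⟩
    filter_upwards [hφ.ae_shiftCoupling t] with z hz
    change (shift t φ z.1 ∈ B') = (z.2 ∈ B')
    rw [hz]

theorem isMartingaleMeasure_shiftCoupling (hφ : LipschitzIncrements p μ K φ) (hp : 1 ≤ p)
    (hmart : IsMartingaleMeasure μ) (t : ℝ) :
    IsMartingaleMeasure ((shiftCoupling μ t φ).map Prod.snd) := by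
  have hT := hφ.measurable_shift t
  have : IsProbabilityMeasure (μ.map (shift t φ)) :=
    Measure.isProbabilityMeasure_map hT.aemeasurable
  have hφi : ∀ s, Integrable (φ s) μ := fun s => (hφ.memLp s).integrable_of_one_le hp
  have hinc : ∀ s, Integrable (fun x => inc s (shift t φ x)) μ := fun s => by
    simp_rw [inc_shift]
    exact (hmart.integrable_inc s).add ((hφi s).const_mul t)
  rw [hφ.map_snd_shiftCoupling]
  refine IsMartingaleMeasure.of_setIntegral_inc (fun n => ?_) fun s S hS => ?_
  · have hc := (continuous_coord (N := N) (d := d) n).measurable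
    rw [integrable_map_measure hc.aestronglyMeasurable hT.aemeasurable]
    refine (integrable_finsetSum Finset.univ fun s _ => (hinc s).abs).mono'
      (hc.comp hT).aestronglyMeasurable (ae_of_all _ fun x => ?_)
    refine le_trans ?_ (norm_le_sum_abs_inc _)
    simp only [Function.comp_apply, coord]
    split_ifs
    · exact norm_le_pi_norm _ _
    · simp
  · rw [setIntegral_map (Fn_le _ _ _ _ hS) (continuous_inc s).measurable.aestronglyMeasurable
      hT.aemeasurable]
    have hS' := hφ.measurableSet_preimage_shift t hS
    simp_rw [inc_shift]
    rw [integral_add (hmart.integrable_inc s).integrableOn ((hφi s).const_mul t).integrableOn,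
      integral_const_mul, hmart.setIntegral_inc s hS', hφ.setIntegral_eq_zero s _ hS']
    simp

theorem costD_shiftCoupling (hφ : LipschitzIncrements p μ K φ) (hp : 0 < p) {t : ℝ}
    (ht : 0 ≤ t) :
    costD p (shiftCoupling μ t φ) = t ^ p * ∑ s, ∫ x, |φ s x| ^ p ∂μ := by
  have := hφ.isProbabilityMeasure_shiftCoupling t
  rw [costD_eq_sum hp (hφ.integrable_cN_shiftCoupling hp t), Finset.mul_sum]
  refine Finset.sum_congr rfl fun s _ => ?_
  have hm : Measurable fun z : PathD N d × PathD N d => |inc s (z.2 - z.1)| ^ p :=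
    (Real.continuous_rpow_const hp.le).measurable.comp
      ((continuous_inc s).measurable.comp (measurable_snd.sub measurable_fst)).abs
  rw [shiftCoupling, integral_map (hφ.measurable_prod_shift t).aemeasurable
    hm.aestronglyMeasurable]
  simp_rw [inc_shift_sub, abs_mul, Real.mul_rpow (abs_nonneg _) (abs_nonneg _),
    abs_of_nonneg ht, integral_const_mul]

theorem sum_integral_Dn_mul_inc_shiftCoupling (hφ : LipschitzIncrements p μ K φ) {q : ℝ}
    (hpq : p.HolderConjugate q) {f : PathD N d → ℝ} (hf : ContDiff ℝ 1 f)
    (hD : ∀ (s : Fin N × Fin d) j, MemLp (fun x => Dn f (s.1 + 1) x j) (ENNReal.ofReal q) μ)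
    (t : ℝ) :
    ∑ s : Fin N × Fin d, ∫ z, Dn f (s.1 + 1) z.1 s.2 * inc s (z.2 - z.1) ∂shiftCoupling μ t φ
      = t * ∑ s, ∫ x, optProj μ f s x * φ s x ∂μ := by
  rw [Finset.mul_sum]
  refine Finset.sum_congr rfl fun s _ => ?_
  have hDm : Measurable (fun x => Dn f (s.1 + 1) x s.2) :=
    ((continuous_apply s.2).comp (continuous_Dn hf (s.1 + 1))).measurable
  have hm : Measurable fun z : PathD N d × PathD N d =>
      Dn f (s.1 + 1) z.1 s.2 * inc s (z.2 - z.1) :=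
    (hDm.comp measurable_fst).mul
      ((continuous_inc s).measurable.comp (measurable_snd.sub measurable_fst))
  have hDi : Integrable (Dn f (s.1 + 1)) μ :=
    Integrable.of_eval fun j => (hD s j).integrable_of_one_le hpq.symm.lt.le
  have hg := memLp_optProj hpq.symm.lt.le hDi (hD s s.2)
  have i1 : Integrable (fun x => (Dn f (s.1 + 1) x s.2 - optProj μ f s x) * φ s x) μ :=
    integrable_mul_of_memLp hpq.symm ((hD s s.2).sub hg) (hφ.memLp s)
  have i2 := integrable_mul_of_memLp hpq.symm hg (hφ.memLp s)
  have h0 := integral_mul_eq_zero_of_setIntegral_eq_zero (Fn_le N d (s.1 + 1))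
    (((hD s s.2).sub hg).integrable_of_one_le hpq.symm.lt.le)
    (fun S hS => setIntegral_optProj hDi hS) (hφ.measurable s) i1
  rw [shiftCoupling, integral_map (hφ.measurable_prod_shift t).aemeasurable
    hm.aestronglyMeasurable]
  simp_rw [inc_shift_sub]
  have e : ∀ x, Dn f (s.1 + 1) x s.2 * (t * φ s x)
      = t * ((Dn f (s.1 + 1) x s.2 - optProj μ f s x) * φ s x + optProj μ f s x * φ s x) :=
    fun x => by ring
  simp_rw [e]
  rw [integral_const_mul, integral_add i1 i2]
  congr 1
  rw [add_eq_right]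
  exact h0

end LipschitzIncrements

theorem coe_ofReal_mul_of_ne_top {δ : ℝ} (hδ : 0 < δ) {l : ℝ≥0∞} (hl : l ≠ ⊤) :
    ((ENNReal.ofReal δ * l : ℝ≥0∞) : EReal) = ((δ * l.toReal : ℝ) : EReal) := by
  conv_lhs => rw [← ENNReal.ofReal_toReal hl]
  rw [← ENNReal.ofReal_mul hδ.le, EReal.coe_ennreal_ofReal, max_eq_left (by positivity)]

theorem le_Lconj {L : ℝ → ℝ≥0∞} {u : ℝ} (hu : 0 ≤ u) (hL : L u ≠ ⊤) (v : ℝ) :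
    ((u * v - (L u).toReal : ℝ) : EReal) ≤ Lconj L v := by
  refine le_trans (le_of_eq ?_) (le_iSup (fun u : {u : ℝ // 0 ≤ u} =>
    ((u.1 * v : ℝ) : EReal) - ((L u.1 : ℝ≥0∞) : EReal)) ⟨u, hu⟩)
  simp only
  conv_rhs => rw [← ENNReal.ofReal_toReal hL]
  rw [EReal.coe_ennreal_ofReal, max_eq_left ENNReal.toReal_nonneg, ← EReal.coe_sub]

theorem PenaltyAssumptions.exists_le_toReal {p : ℝ} {L : ℝ → ℝ≥0∞} (hL : PenaltyAssumptions p L)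
    (M : ℝ) : ∃ U, 1 ≤ U ∧ ∀ u, U ≤ u → L u ≠ ⊤ → M * u ^ p ≤ (L u).toReal := by
  have h := hL.growth.eventually (lt_mem_nhds (ENNReal.ofReal_lt_top (r := M)))
  obtain ⟨U, hU⟩ := eventually_atTop.1 h
  refine ⟨max U 1, le_max_right _ _, fun u hu hLu => ?_⟩
  have hu0 : 0 < u := lt_of_lt_of_le one_pos ((le_max_right _ _).trans hu)
  have hup : 0 < u ^ p := Real.rpow_pos_of_pos hu0 p
  have h1 := (hU u ((le_max_left _ _).trans hu)).le
  rw [ENNReal.le_div_iff_mul_le (Or.inl (by simpa using hup)) (Or.inl ENNReal.ofReal_ne_top),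
    ← ENNReal.ofReal_mul' hup.le] at h1
  exact (ENNReal.ofReal_le_iff_le_toReal hLu).1 h1

/-- Uniform upper bound for the penalised problem in terms of the convex conjugate of the
penalty. -/
theorem eventually_sub_penalty_le {p q : ℝ} (hpq : p.HolderConjugate q) {L : ℝ → ℝ≥0∞}
    (hL : PenaltyAssumptions p L) {I E₀ B : ℝ} (hI : 0 ≤ I) (hB : Lconj L I < (B : EReal))
    {S : Set (ℝ × ℝ)} (hS0 : ∀ z ∈ S, 0 ≤ z.1)
    (hS : ∀ ε : ℝ, 0 < ε → ∃ K : ℝ, 0 ≤ K ∧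
      ∀ z ∈ S, z.2 ≤ E₀ + I * z.1 + (ε + K * z.1 ^ p) ^ (1 / q) * z.1) :
    ∀ᶠ δ : ℝ in nhdsWithin 0 (Ioi 0), ∀ z ∈ S,
      (z.2 : EReal) - ((ENNReal.ofReal δ * L (z.1 / δ) : ℝ≥0∞) : EReal)
        ≤ ((E₀ + δ * B : ℝ) : EReal) := by
  have hp := hpq.pos
  have hq := hpq.symm.pos
  obtain ⟨B', hB'1, hB'2⟩ := EReal.lt_iff_exists_real_btwn.1 hB
  have hBB : B' < B := EReal.coe_lt_coe_iff.1 hB'2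
  have hB0 : 0 ≤ B := by
    have := le_Lconj (L := L) le_rfl (by simp [hL.zero]) I
    have := this.trans hB.le
    simpa [hL.zero] using EReal.coe_le_coe_iff.1 this
  obtain ⟨K₁, hK₁, hS₁⟩ := hS 1 one_pos
  obtain ⟨U, hU1, hU⟩ := hL.exists_le_toReal (I + (1 + K₁) ^ (1 / q))
  have hU0 : 0 < U := by linarith
  obtain ⟨ε, hεB, hε⟩ : ∃ ε : ℝ, (ε + ε) ^ (1 / q) * U < B - B' ∧ 0 < ε := by
    have h : ∀ᶠ ε : ℝ in nhdsWithin 0 (Ioi 0), (ε + ε) ^ (1 / q) * U < B - B' := by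
      refine Eventually.filter_mono nhdsWithin_le_nhds ?_
      have : Continuous (fun ε : ℝ => (ε + ε) ^ (1 / q) * U) :=
        ((Real.continuous_rpow_const (one_div_nonneg.2 hq.le)).comp
          (continuous_id.add continuous_id)).mul continuous_const
      refine this.continuousAt.eventually_lt continuousAt_const ?_
      simpa [Real.zero_rpow (inv_ne_zero hq.ne')] using hBB
    exact (h.and self_mem_nhdsWithin).exists
  obtain ⟨K, hK, hSε⟩ := hS ε hε
  have hδε : ∀ᶠ δ : ℝ in nhdsWithin 0 (Ioi 0), K * (δ * U) ^ p < ε := by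
    refine Eventually.filter_mono nhdsWithin_le_nhds ?_
    have : Continuous (fun δ : ℝ => K * (δ * U) ^ p) :=
      continuous_const.mul ((Real.continuous_rpow_const hp.le).comp
        (continuous_id.mul continuous_const))
    refine this.continuousAt.eventually_lt continuousAt_const ?_
    simpa [Real.zero_rpow hp.ne'] using hε
  have hδ1 : ∀ᶠ δ : ℝ in nhdsWithin 0 (Ioi 0), δ < 1 :=
    Eventually.filter_mono nhdsWithin_le_nhds (gt_mem_nhds one_pos)
  filter_upwards [hδε, hδ1, self_mem_nhdsWithin] with δ hδε hδ1 hδ z hz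
  have hδ : 0 < δ := hδ
  obtain ⟨u, hu⟩ : ∃ u, u = z.1 / δ := ⟨_, rfl⟩
  have hz1 : z.1 = δ * u := by rw [hu]; field_simp
  have hu0 : 0 ≤ u := by rw [hu]; exact div_nonneg (hS0 z hz) hδ.le
  rw [← hu]
  by_cases hLu : L u = ⊤
  · rw [hLu, ENNReal.mul_top (by simpa using hδ)]
    simp
  rw [coe_ofReal_mul_of_ne_top hδ hLu, ← EReal.coe_sub, EReal.coe_le_coe_iff]
  rcases le_total U u with h | h
  · have hu1 : 1 ≤ u := hU1.trans h
    have hup : u ≤ u ^ p := Real.self_le_rpow_of_one_le hu1 hpq.lt.le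
    have hup1 : 1 ≤ u ^ p := hu1.trans hup
    have h1 := hS₁ z hz
    have h2 := hU u h hLu
    rw [hz1, Real.mul_rpow hδ.le hu0] at h1
    have h3 : (1 + K₁ * (δ ^ p * u ^ p)) ^ (1 / q) ≤ ((1 + K₁) * u ^ p) ^ (1 / q) := by
      refine Real.rpow_le_rpow (by positivity) ?_ (one_div_nonneg.2 hq.le)
      have : δ ^ p * u ^ p ≤ 1 * u ^ p :=
        mul_le_mul_of_nonneg_right (Real.rpow_le_one hδ.le hδ1.le hp.le) (by positivity)
      nlinarith [mul_le_mul_of_nonneg_left this hK₁]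
    have h4 : ((1 + K₁) * u ^ p) ^ (1 / q) * u = (1 + K₁) ^ (1 / q) * u ^ p := by
      rw [Real.mul_rpow (by positivity) (by positivity), ← Real.rpow_mul hu0, mul_one_div,
        mul_assoc]
      congr 1
      nth_rewrite 2 [← Real.rpow_one u]
      rw [← Real.rpow_add (by linarith)]
      congr 1
      have h5 := hpq.mul_eq_add
      field_simp
      linarith
    have h6 : (1 + K₁ * (δ ^ p * u ^ p)) ^ (1 / q) * u ≤ (1 + K₁) ^ (1 / q) * u ^ p :=
      (mul_le_mul_of_nonneg_right h3 hu0).trans_eq h4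
    have h7 : I * u ≤ I * u ^ p := mul_le_mul_of_nonneg_left hup hI
    have h8 : δ * (I * u + (1 + K₁ * (δ ^ p * u ^ p)) ^ (1 / q) * u) ≤ δ * (L u).toReal :=
      mul_le_mul_of_nonneg_left (by linarith) hδ.le
    have h9 : 0 ≤ δ * B := by positivity
    linarith
  · have h1 := hSε z hz
    rw [hz1] at h1
    have h2 : (ε + K * (δ * u) ^ p) ^ (1 / q) ≤ (ε + ε) ^ (1 / q) := by
      refine Real.rpow_le_rpow (by positivity) ?_ (one_div_nonneg.2 hq.le)
      have : (δ * u) ^ p ≤ (δ * U) ^ p :=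
        Real.rpow_le_rpow (by positivity) (mul_le_mul_of_nonneg_left h hδ.le) hp.le
      linarith [mul_le_mul_of_nonneg_left this hK]
    have h3 : (ε + K * (δ * u) ^ p) ^ (1 / q) * u ≤ (ε + ε) ^ (1 / q) * U :=
      mul_le_mul h2 h hu0 (by positivity)
    have h4 : u * I - (L u).toReal ≤ B' :=
      EReal.coe_le_coe_iff.1 ((le_Lconj hu0 hLu I).trans hB'1.le)
    have h5 : δ * (I * u + (ε + K * (δ * u) ^ p) ^ (1 / q) * u - (L u).toReal) ≤ δ * B :=
      mul_le_mul_of_nonneg_left (by linarith) hδ.le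
    linarith

theorem eventually_VMartD_le {N d : ℕ} {p q : ℝ} (hpq : p.HolderConjugate q)
    {L : ℝ → ℝ≥0∞} (hL : PenaltyAssumptions p L)
    {μ : Measure (PathD N d)} [IsProbabilityMeasure μ] (hmart : IsMartingaleMeasure μ)
    (hmom : Integrable (fun x : PathD N d => ‖x‖ ^ p) μ)
    {f : PathD N d → ℝ} (hf : ContDiff ℝ 1 f) {C : ℝ}
    (hgrow : ∀ n : ℕ, ∀ x : PathD N d, lpnorm q (Dn f n x) ≤ C * (1 + ‖x‖ ^ (p - 1)))
    {b : ℝ} (hb : Lconj L (predDist q μ f) < (b : EReal)) :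
    ∀ᶠ δ : ℝ in nhdsWithin 0 (Ioi 0),
      VMartD p L μ f δ ≤ ((∫ x, f x ∂μ + δ * b : ℝ) : EReal) := by
  have hS := eventually_sub_penalty_le hpq hL (E₀ := ∫ x, f x ∂μ) (predDist_nonneg q μ f) hb
    (S := {z | ∃ π : Measure (PathD N d × PathD N d), (IsProbabilityMeasure π ∧
      IsBicausalCoupling μ (π.map Prod.snd) π ∧ IsMartingaleMeasure (π.map Prod.snd) ∧
      Integrable (fun z => cN p z.1 z.2) π) ∧ z = (costD p π ^ (1 / p), ∫ z, f z.2 ∂π)}) ?_ ?_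
  · filter_upwards [hS] with δ hδ
    exact iSup_le fun π => hδ _ ⟨π.1, π.2, rfl⟩
  · rintro _ ⟨π, -, rfl⟩
    exact Real.rpow_nonneg (costD_nonneg hpq.ne_zero π) _
  · intro ε hε
    obtain ⟨K, hK, hexp⟩ := exists_expansion_bound hpq hmom hf hgrow hε
    refine ⟨K, hK, ?_⟩
    rintro _ ⟨π, ⟨_, hbc, hν, hcost⟩, rfl⟩
    have h1 := (abs_le.1 (hexp π hbc.1.2.1 hcost)).2
    have h2 := sum_integral_Dn_mul_inc_le_predDist hpq hmart hmom hf hgrow hbc hν hcost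
    simp only
    rw [← Real.rpow_mul (costD_nonneg hpq.ne_zero π), one_div_mul_cancel hpq.ne_zero,
      Real.rpow_one]
    linarith

theorem eventually_le_VMartD {N d : ℕ} {p q : ℝ} (hpq : p.HolderConjugate q)
    {L : ℝ → ℝ≥0∞} (hL : PenaltyAssumptions p L)
    {μ : Measure (PathD N d)} [IsProbabilityMeasure μ] (hmart : IsMartingaleMeasure μ)
    (hmom : Integrable (fun x : PathD N d => ‖x‖ ^ p) μ)
    {f : PathD N d → ℝ} (hf : ContDiff ℝ 1 f) {C : ℝ}
    (hgrow : ∀ n : ℕ, ∀ x : PathD N d, lpnorm q (Dn f n x) ≤ C * (1 + ‖x‖ ^ (p - 1)))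
    {a : ℝ} (ha : (a : EReal) < Lconj L (predDist q μ f)) :
    ∀ᶠ δ : ℝ in nhdsWithin 0 (Ioi 0),
      ((∫ x, f x ∂μ + δ * a : ℝ) : EReal) ≤ VMartD p L μ f δ := by
  have hp := hpq.pos
  have hq := hpq.symm.pos
  obtain ⟨⟨u, hu⟩, ha⟩ := lt_iSup_iff.1 ha
  simp only at ha
  have hLu : L u ≠ ⊤ := fun h => by simp [h] at ha
  rw [← ENNReal.ofReal_toReal hLu, EReal.coe_ennreal_ofReal, max_eq_left ENNReal.toReal_nonneg,
    ← EReal.coe_sub, EReal.coe_lt_coe_iff] at ha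
  set l := (L u).toReal with hl
  obtain ⟨κ, hκa, hκ⟩ : ∃ κ : ℝ, a < u * κ - l ∧ κ < predDist q μ f := by
    have h : ∀ᶠ κ : ℝ in nhdsWithin (predDist q μ f) (Iio (predDist q μ f)), a < u * κ - l := by
      refine Eventually.filter_mono nhdsWithin_le_nhds ?_
      have : Continuous (fun κ : ℝ => u * κ - l) := by fun_prop
      exact continuousAt_const.eventually_lt this.continuousAt ha
    exact (h.and self_mem_nhdsWithin).exists
  have hD : ∀ (s : Fin N × Fin d) j,
      MemLp (fun x => Dn f (s.1 + 1) x j) (ENNReal.ofReal q) μ := fun s j =>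
    memLp_Dn hpq hmom hf hgrow (s.1 + 1) j
  obtain ⟨Kφ, φ, hKφ, hφ, hφ1, hφκ⟩ := exists_lipschitzIncrements hpq (fun s =>
    memLp_optProj hpq.symm.lt.le (Integrable.of_eval fun j =>
      (hD s j).integrable_of_one_le hpq.symm.lt.le) (hD s s.2)) hκ
  obtain ⟨ε, hεa, hε⟩ : ∃ ε : ℝ, a < u * κ - l - (ε + ε) ^ (1 / q) * u ∧ 0 < ε := by
    have h : ∀ᶠ ε : ℝ in nhdsWithin 0 (Ioi 0), a < u * κ - l - (ε + ε) ^ (1 / q) * u := by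
      refine Eventually.filter_mono nhdsWithin_le_nhds ?_
      have : Continuous (fun ε : ℝ => u * κ - l - (ε + ε) ^ (1 / q) * u) :=
        continuous_const.sub (((Real.continuous_rpow_const (one_div_nonneg.2 hq.le)).comp
          (continuous_id.add continuous_id)).mul continuous_const)
      refine continuousAt_const.eventually_lt this.continuousAt ?_
      simpa [Real.zero_rpow (inv_ne_zero hq.ne')] using hκa
    exact (h.and self_mem_nhdsWithin).exists
  obtain ⟨K, hK, hexp⟩ := exists_expansion_bound hpq hmom hf hgrow hε
  have hδε : ∀ᶠ δ : ℝ in nhdsWithin 0 (Ioi 0), K * (δ * u) ^ p < ε := by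
    refine Eventually.filter_mono nhdsWithin_le_nhds ?_
    have : Continuous (fun δ : ℝ => K * (δ * u) ^ p) :=
      continuous_const.mul ((Real.continuous_rpow_const hp.le).comp
        (continuous_id.mul continuous_const))
    refine this.continuousAt.eventually_lt continuousAt_const ?_
    simpa [Real.zero_rpow hp.ne'] using hε
  have hδK : ∀ᶠ δ : ℝ in nhdsWithin 0 (Ioi 0), δ * u * Kφ < 1 := by
    refine Eventually.filter_mono nhdsWithin_le_nhds ?_
    have : Continuous (fun δ : ℝ => δ * u * Kφ) := by fun_prop
    exact this.continuousAt.eventually_lt continuousAt_const (by simp)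
  filter_upwards [hδε, hδK, self_mem_nhdsWithin] with δ hδε hδK hδ
  have hδ : 0 < δ := hδ
  have ht : 0 ≤ δ * u := by positivity
  set π := shiftCoupling μ (δ * u) φ with hπ
  have hπP : IsProbabilityMeasure π := hφ.isProbabilityMeasure_shiftCoupling _
  have hcost := hφ.integrable_cN_shiftCoupling hp (δ * u)
  have hc0 := costD_nonneg hpq.ne_zero π
  have hc : costD p π ≤ (δ * u) ^ p := by
    rw [hφ.costD_shiftCoupling hp ht]
    exact mul_le_of_le_one_right (by positivity) hφ1
  have hr : costD p π ^ (1 / p) ≤ δ * u := by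
    refine (Real.rpow_le_rpow hc0 hc (one_div_nonneg.2 hp.le)).trans_eq ?_
    rw [← Real.rpow_mul ht, mul_one_div_cancel hp.ne', Real.rpow_one]
  have hr0 : 0 ≤ costD p π ^ (1 / p) / δ := div_nonneg (Real.rpow_nonneg hc0 _) hδ.le
  have hLr : L (costD p π ^ (1 / p) / δ) ≤ L u :=
    hL.mono hr0 hu (by rw [div_le_iff₀ hδ]; linarith)
  have hexp := (abs_le.1 (hexp π (hφ.map_fst_shiftCoupling _) hcost)).1
  rw [hφ.sum_integral_Dn_mul_inc_shiftCoupling hpq hf hD] at hexp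
  have hrem : (ε + K * costD p π) ^ (1 / q) * costD p π ^ (1 / p)
      ≤ (ε + ε) ^ (1 / q) * (δ * u) := by
    refine mul_le_mul (Real.rpow_le_rpow (by positivity) ?_ (one_div_nonneg.2 hq.le)) hr
      (by positivity) (by positivity)
    linarith [mul_le_mul_of_nonneg_left hc hK]
  refine le_trans ?_ (le_iSup (fun π : {π : Measure (PathD N d × PathD N d) //
      IsProbabilityMeasure π ∧ IsBicausalCoupling μ (π.map Prod.snd) π ∧
      IsMartingaleMeasure (π.map Prod.snd) ∧
      Integrable (fun z => cN p z.1 z.2) π} => ((∫ z, f z.2 ∂π.1 : ℝ) : EReal) -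
      ((ENNReal.ofReal δ * L ((costD p π.1) ^ (1 / p) / δ) : ℝ≥0∞) : EReal))
    ⟨π, hπP, hφ.isBicausalCoupling_shiftCoupling hKφ ht hδK,
      hφ.isMartingaleMeasure_shiftCoupling hpq.lt.le hmart _, hcost⟩)
  simp only
  rw [coe_ofReal_mul_of_ne_top hδ (ne_top_of_le_ne_top hLu hLr), ← EReal.coe_sub,
    EReal.coe_le_coe_iff]
  have h1 : (L (costD p π ^ (1 / p) / δ)).toReal ≤ l := ENNReal.toReal_mono hLu hLr
  have h2 : δ * u * κ ≤ δ * u * ∑ s, ∫ x, optProj μ f s x * φ s x ∂μ :=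
    mul_le_mul_of_nonneg_left hφκ.le ht
  have h3 : δ * a ≤ δ * (u * κ - l - (ε + ε) ^ (1 / q) * u) :=
    mul_le_mul_of_nonneg_left hεa.le hδ.le
  have h4 : δ * (L (costD p π ^ (1 / p) / δ)).toReal ≤ δ * l :=
    mul_le_mul_of_nonneg_left h1 hδ.le
  linarith

/-- Discrete-time sensitivity under the martingale constraint:
`lim_{δ→0+} (V_Mart(δ) − V_Mart(0))/δ = L*(inf_{h ∈ H} ‖ᵒ𝔻f − h‖_{L^q(μ)})`, the infimum
being over predictable processes `h` with `‖h‖_{L^q(μ)} < ∞`. -/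
theorem statement_11 {N d : ℕ} (p q : ℝ) (hp : 1 < p) (hq : q = p / (p - 1))
    (L : ℝ → ℝ≥0∞) (hL : PenaltyAssumptions p L)
    (μ : Measure (PathD N d)) [IsProbabilityMeasure μ]
    (hmart : IsMartingaleMeasure μ)
    (hmom : Integrable (fun x : PathD N d => ‖x‖ ^ p) μ)
    (f : PathD N d → ℝ) (hf : ContDiff ℝ 1 f)
    (C : ℝ) (hgrow : ∀ n : ℕ, ∀ x : PathD N d,
      lpnorm q (Dn f n x) ≤ C * (1 + ‖x‖ ^ (p - 1))) :
    Tendsto (fun δ : ℝ =>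
        (((1 / δ : ℝ)) : EReal) * (VMartD p L μ f δ - ((∫ x, f x ∂μ : ℝ) : EReal)))
      (nhdsWithin 0 (Set.Ioi 0))
      (nhds (Lconj L
        (⨅ h : {h : ℕ → PathD N d → Fin d → ℝ // IsPredictable h ∧
            ∀ n : ℕ, 1 ≤ n → n ≤ N → Integrable (fun x => lpnorm q (h n x) ^ q) μ},
          (∑ n ∈ Finset.Icc 1 N,
            ∫ x, lpnorm q ((μ[Dn f n | Fn N d n]) x - h.1 n x) ^ q ∂μ) ^ (1 / q)))) := by
  have hpq : p.HolderConjugate q := (Real.holderConjugate_iff_eq_conjExponent hp).2 hq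
  change Tendsto _ _ (nhds (Lconj L (predDist q μ f)))
  have hcancel : ∀ {δ : ℝ}, 0 < δ → ∀ c : ℝ,
      ((1 / δ : ℝ) : EReal) * (((∫ x, f x ∂μ + δ * c : ℝ) : EReal) - ((∫ x, f x ∂μ : ℝ) : EReal))
        = (c : EReal) := by
    intro δ hδ c
    rw [← EReal.coe_sub, ← EReal.coe_mul, add_sub_cancel_left, one_div,
      inv_mul_cancel_left₀ hδ.ne']
  have hnonneg : ∀ {δ : ℝ}, 0 < δ → (0 : EReal) ≤ ((1 / δ : ℝ) : EReal) := fun hδ =>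
    EReal.coe_nonneg.2 (one_div_nonneg.2 hδ.le)
  refine tendsto_order.2 ⟨fun a ha => ?_, fun b hb => ?_⟩
  · obtain ⟨a', haa', ha'⟩ := EReal.lt_iff_exists_real_btwn.1 ha
    filter_upwards [eventually_le_VMartD hpq hL hmart hmom hf hgrow ha', self_mem_nhdsWithin]
      with δ h hδ
    refine haa'.trans_le ((hcancel hδ a').ge.trans ?_)
    exact mul_le_mul_of_nonneg_left (EReal.sub_le_sub h le_rfl) (hnonneg hδ)
  · obtain ⟨b', hb', hbb'⟩ := EReal.lt_iff_exists_real_btwn.1 hb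
    filter_upwards [eventually_VMartD_le hpq hL hmart hmom hf hgrow hb', self_mem_nhdsWithin]
      with δ h hδ
    refine lt_of_le_of_lt (le_trans ?_ (hcancel hδ b').le) hbb'
    exact mul_le_mul_of_nonneg_left (EReal.sub_le_sub h le_rfl) (hnonneg hδ)

end
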